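/- arXiv:0906.3881 — 6 statements merged into one kernel-verified Lean document; each statement's English description precedes it below -/
import Mathlib

section
/- Property (L) in type AIII: let s and u be semisimple elements of p. Then the centralizers g^s and g^u are conjugate under GL(V) if and only if they are conjugate under K; that is, there exists g ∈ GL(V) with g·g^s·g⁻¹ = g^u if and only if there exists k ∈ K with k·g^s·k⁻¹ = g^u. -/
/-! Property (L) in type AIII: for semisimple `s, u ∈ p`, the centralizers `g^s` and `g^u`
are conjugate under `GL(V)` iff they are conjugate under `K`. -/

namespace SymmetricPairAIII

variable {𝕂 : Type*} [Field 𝕂] {N : ℕ}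

/-- `gl(V)` for `V = 𝕂^N`. -/
abbrev EndV (𝕂 : Type*) [Field 𝕂] (N : ℕ) := Module.End 𝕂 (Fin N → 𝕂)

/-- Semisimple = diagonalizable: the eigenspaces span `V`. -/
def IsSemisimpleE (x : EndV 𝕂 N) : Prop :=
  (⨆ c : 𝕂, LinearMap.ker (x - c • (1 : EndV 𝕂 N))) = ⊤

/-- The centralizer `g^x` of `x` in `gl(V)`. -/
def cent (x : EndV 𝕂 N) : Set (EndV 𝕂 N) := {z | z * x = x * z}

/-- `p = Hom(V_a, V_b) ⊕ Hom(V_b, V_a)`, the `(-1)`-eigenspace of the type AIII involution. -/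
def pAIII (Va Vb : Submodule 𝕂 (Fin N → 𝕂)) : Set (EndV 𝕂 N) :=
  {x | Submodule.map x Va ≤ Vb ∧ Submodule.map x Vb ≤ Va}

/-- `K = {g ∈ GL(V) : g V_a = V_a, g V_b = V_b}`. -/
def KAIII (Va Vb : Submodule 𝕂 (Fin N → 𝕂)) : Set (EndV 𝕂 N)ˣ :=
  {g | Submodule.map (g : EndV 𝕂 N) Va = Va ∧ Submodule.map (g : EndV 𝕂 N) Vb = Vb}

/-- The conjugation action `g.z = g z g⁻¹` of `GL(V)` on `gl(V)`. -/
def conjAct (g : (EndV 𝕂 N)ˣ) (z : EndV 𝕂 N) : EndV 𝕂 N :=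
  (g : EndV 𝕂 N) * z * ((g⁻¹ : (EndV 𝕂 N)ˣ) : EndV 𝕂 N)

end SymmetricPairAIII

open SymmetricPairAIII

/-! The centralizer of a diagonalizable `s` and the set of eigenspaces of `s` determine each other:
`z` commutes with `s` iff it preserves every eigenspace of `s`, and the rank-one maps in the
centralizer recover the eigenspaces. Hence `g^s` and `g^u` are conjugate by an automorphism
exactly when it carries the eigenspaces of `s` bijectively onto those of `u`.

For `s ∈ p` the involution `ε` maps the `c`-eigenspace onto the `(-c)`-eigenspace. Conjugacy under
`GL(V)` gives, for each dimension `d`, as many eigenvalues of `s` as of `u` with `d`-dimensional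
eigenspace. Negation acts on both sets with at most one fixed point, namely `0`, so by parity it
fixes `0` in both or in neither, and the bijection of eigenvalues can be chosen to commute with
negation. Moreover `s` restricts to isomorphisms between `s V_a` and `s V_b`, so
`dim (V_a ∩ ker s) - dim (V_b ∩ ker s) = dim V_a - dim V_b`, and the two kernels are isomorphic as
graded spaces. Choosing isomorphisms of eigenspaces on one member of each pair `{c, -c}`,
transporting them by `ε` to the other, and using a graded one for `c = 0`, one obtains an
automorphism that commutes with `ε`, that is, an element of `K`. -/

namespace SymmetricPairAIII

section Gluing

variable {ι R M M' : Type*} [Ring R] [AddCommGroup M] [Module R M] [AddCommGroup M'] [Module R M']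

theorem exists_linearMap_eqOn_of_iSupIndep {W : ι → Submodule R M} (hind : iSupIndep W)
    (htop : iSup W = ⊤) (φ : ι → M →ₗ[R] M') :
    ∃ f : M →ₗ[R] M', ∀ i, ∀ v ∈ W i, f v = φ i v := by
  classical
  let e := LinearEquiv.ofBijective (DirectSum.coeLinearMap W)
    (DirectSum.isInternal_submodule_of_iSupIndep_of_iSup_eq_top hind htop)
  refine ⟨DirectSum.toModule R ι M' (fun i ↦ φ i ∘ₗ (W i).subtype) ∘ₗ e.symm, fun i v hv ↦ ?_⟩
  have he : e.symm v = DirectSum.lof R ι (fun i ↦ W i) i ⟨v, hv⟩ := by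
    rw [LinearEquiv.symm_apply_eq]
    exact (DirectSum.coeLinearMap_lof W i ⟨v, hv⟩).symm
  simp [he]

theorem linearMap_ext_of_iSup_eq_top {W : ι → Submodule R M} (htop : iSup W = ⊤)
    {f g : M →ₗ[R] M'} (h : ∀ i, ∀ v ∈ W i, f v = g v) : f = g := by
  rw [← LinearMap.eqLocus_eq_top, eq_top_iff, ← htop]
  exact iSup_le h

theorem map_eq_map_of_eqOn {p : Submodule R M} {f g : M →ₗ[R] M'} (h : ∀ v ∈ p, f v = g v) :
    p.map f = p.map g :=
  SetLike.coe_injective (Set.image_congr h)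

end Gluing

theorem mem_centralizer_singleton_iff_commute {M : Type*} [Mul M] {a b : M} :
    b ∈ Set.centralizer {a} ↔ Commute a b := by
  simp [Set.mem_centralizer_iff, Commute, SemiconjBy]

section Endomorphism

variable {R M M' : Type*} [CommRing R] [AddCommGroup M] [Module R M] [AddCommGroup M'] [Module R M']

theorem iSup_eigenvalues_eigenspace (s : Module.End R M) :
    ⨆ c : s.Eigenvalues, s.eigenspace c = ⨆ c, s.eigenspace c := by
  refine le_antisymm (iSup_le fun c ↦ le_iSup s.eigenspace (c : R)) (iSup_le fun c ↦ ?_)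
  by_cases hc : s.HasEigenvalue c
  · exact le_iSup (fun c : s.Eigenvalues ↦ s.eigenspace c) ⟨c, hc⟩
  · simp [not_not.mp (mt Module.End.hasEigenvalue_iff.mpr hc)]

theorem eigenspace_conj (e : M ≃ₗ[R] M') (s : Module.End R M) (c : R) :
    (e.conj s).eigenspace c = (s.eigenspace c).map (e : M →ₗ[R] M') := by
  ext v
  simp [Submodule.mem_map_equiv, LinearEquiv.conj_apply_apply, ← e.symm.injective.eq_iff]

theorem image_conj_centralizer (e : M ≃ₗ[R] M') (s : Module.End R M) :
    e.conj '' Set.centralizer {s} = Set.centralizer {e.conj s} := by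
  ext z
  obtain ⟨z, rfl⟩ := e.conj.surjective z
  rw [e.conj.injective.mem_set_image, mem_centralizer_singleton_iff_commute,
    mem_centralizer_singleton_iff_commute]
  exact (commute_map_iff e.conjRingEquiv.injective).symm

end Endomorphism

section Diagonalizable

variable {𝕜 V V' : Type*} [Field 𝕜] [AddCommGroup V] [Module 𝕜 V] [AddCommGroup V'] [Module 𝕜 V']
  {s u : Module.End 𝕜 V}

/-- Diagonalizability of an endomorphism: its eigenspaces span. This is the notion of semisimple
element for `gl(V)`, over a field that need not be algebraically closed. -/
def IsDiagonalizable (s : Module.End 𝕜 V) : Prop :=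
  ⨆ c, s.eigenspace c = ⊤

theorem IsDiagonalizable.iSup_eigenvalues (hs : IsDiagonalizable s) :
    ⨆ c : s.Eigenvalues, s.eigenspace c = ⊤ :=
  (iSup_eigenvalues_eigenspace s).trans hs

theorem iSupIndep_eigenvalues_eigenspace (s : Module.End 𝕜 V) :
    iSupIndep fun c : s.Eigenvalues ↦ s.eigenspace c :=
  s.eigenspaces_iSupIndep.comp Subtype.val_injective

theorem IsDiagonalizable.mem_centralizer_iff (hs : IsDiagonalizable s) {z : Module.End 𝕜 V} :
    z ∈ Set.centralizer {s} ↔ ∀ c : s.Eigenvalues, s.eigenspace c ∈ z.invtSubmodule := by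
  rw [mem_centralizer_singleton_iff_commute]
  refine ⟨fun h c ↦ Module.End.mapsTo_genEigenspace_of_comm h _ _, fun h ↦ ?_⟩
  refine linearMap_ext_of_iSup_eq_top hs.iSup_eigenvalues fun c v hv ↦ ?_
  have hzv : s (z v) = c.val • z v := Module.End.mem_eigenspace_iff.mp (h c hv)
  simp [Module.End.mem_eigenspace_iff.mp hv, hzv]

theorem IsDiagonalizable.conj (hs : IsDiagonalizable s) (e : V ≃ₗ[𝕜] V') :
    IsDiagonalizable (e.conj s) := by
  simp_rw [IsDiagonalizable, eigenspace_conj, ← Submodule.map_iSup]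
  rw [hs, Submodule.map_top, LinearEquiv.range]

theorem IsDiagonalizable.exists_eigenspace_le (hs : IsDiagonalizable s)
    (h : Set.centralizer {s} ⊆ Set.centralizer {u}) (c : s.Eigenvalues) :
    ∃ d : 𝕜, s.eigenspace c ≤ u.eigenspace d := by
  classical
  obtain ⟨v, hv, hv0⟩ := Module.End.HasEigenvalue.exists_hasEigenvector c.2
  obtain ⟨f, hfv⟩ := Module.Projective.exists_dual_eq_one 𝕜 hv0
  obtain ⟨g, hg⟩ := exists_linearMap_eqOn_of_iSupIndep s.eigenspaces_iSupIndep hs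
    (Pi.single (c : 𝕜) f)
  have hgv : g v = 1 := by simpa [hfv] using hg c v hv
  refine ⟨g (u v), fun w hw ↦ ?_⟩
  -- The rank-one map `x ↦ g x • w` commutes with `s`, hence with `u`; evaluate at `v`.
  have hcomm : g.smulRight w ∈ Set.centralizer {s} := by
    refine hs.mem_centralizer_iff.mpr fun d x hx ↦ ?_
    rcases eq_or_ne d c with rfl | hdc
    · exact Submodule.smul_mem _ _ hw
    · have hdc' : d.val ≠ c.val := fun h ↦ hdc (Subtype.ext h)
      have : g x = 0 := by simpa [hdc'] using hg d x hx
      simp [this]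
  have := LinearMap.congr_fun (mem_centralizer_singleton_iff_commute.mp (h hcomm)) v
  simpa [hgv, Module.End.mem_eigenspace_iff, eq_comm] using this

theorem IsDiagonalizable.exists_eigenspace_eq (hs : IsDiagonalizable s) (hu : IsDiagonalizable u)
    (h : Set.centralizer {s} = Set.centralizer {u}) (c : s.Eigenvalues) :
    ∃ d : u.Eigenvalues, s.eigenspace c = u.eigenspace d := by
  obtain ⟨d, hcd⟩ := hs.exists_eigenspace_le h.le c
  have hd : u.HasEigenvalue d := ne_bot_of_le_ne_bot c.2 hcd
  obtain ⟨c', hdc⟩ := hu.exists_eigenspace_le h.ge ⟨d, hd⟩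
  obtain rfl : c.val = c' := by
    by_contra hne
    exact c.2 ((s.disjoint_genEigenspace hne 1 1).eq_bot_of_le (hcd.trans hdc))
  exact ⟨⟨d, hd⟩, hcd.antisymm hdc⟩

theorem eigenvalues_eigenspace_injective (s : Module.End 𝕜 V) :
    Function.Injective fun c : s.Eigenvalues ↦ s.eigenspace c :=
  fun c d h ↦ Subtype.ext (s.injOn_genEigenspace 1 c.2 d.2 h)

theorem IsDiagonalizable.exists_equiv_eigenvalues (hs : IsDiagonalizable s)
    (hu : IsDiagonalizable u) (h : Set.centralizer {s} = Set.centralizer {u}) :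
    ∃ σ : s.Eigenvalues ≃ u.Eigenvalues,
      ∀ c : s.Eigenvalues, s.eigenspace c = u.eigenspace (σ c) := by
  choose σ hσ using hs.exists_eigenspace_eq hu h
  refine ⟨Equiv.ofBijective σ ⟨fun c d hcd ↦ ?_, fun d ↦ ?_⟩, hσ⟩
  · exact eigenvalues_eigenspace_injective s (by simp only [hσ, hcd])
  · obtain ⟨c, hc⟩ := hu.exists_eigenspace_eq hs h.symm d
    exact ⟨c, eigenvalues_eigenspace_injective u (by simp only [← hσ, hc])⟩

theorem IsDiagonalizable.image_conj_centralizer_eq_iff {u : Module.End 𝕜 V'}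
    (hs : IsDiagonalizable s) (hu : IsDiagonalizable u) (e : V ≃ₗ[𝕜] V') :
    e.conj '' Set.centralizer {s} = Set.centralizer {u} ↔
      ∃ σ : s.Eigenvalues ≃ u.Eigenvalues,
        ∀ c : s.Eigenvalues, (s.eigenspace c).map (e : V →ₗ[𝕜] V') = u.eigenspace (σ c) := by
  refine ⟨fun h ↦ ?_, fun ⟨σ, hσ⟩ ↦ ?_⟩
  · rw [image_conj_centralizer] at h
    obtain ⟨σ, hσ⟩ := (hs.conj e).exists_equiv_eigenvalues hu h
    have hconj (c : 𝕜) : s.HasEigenvalue c ↔ (e.conj s).HasEigenvalue c := by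
      simp [Module.End.hasEigenvalue_iff, eigenspace_conj]
    refine ⟨(Equiv.subtypeEquivRight hconj).trans σ, fun c ↦ ?_⟩
    rw [← eigenspace_conj]
    exact hσ (Equiv.subtypeEquivRight hconj c)
  · ext z
    obtain ⟨z, rfl⟩ := e.conj.surjective z
    rw [e.conj.injective.mem_set_image, hs.mem_centralizer_iff, hu.mem_centralizer_iff,
      ← σ.forall_congr_right]
    simp_rw [← hσ, LinearEquiv.map_mem_invtSubmodule_conj_iff]

end Diagonalizable

section Permutation

open Function Equiv

theorem isConj_of_pow_prime_eq_one {α : Type*} [Fintype α] [DecidableEq α] {p : ℕ}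
    [Fact p.Prime] {σ τ : Perm α} (hσ : σ ^ p = 1) (hτ : τ ^ p = 1)
    (h : Fintype.card (fixedPoints σ) = Fintype.card (fixedPoints τ)) : IsConj σ τ := by
  rw [Perm.isConj_iff_cycleType_eq, Perm.cycleType_of_pow_prime_eq_one hσ,
    Perm.cycleType_of_pow_prime_eq_one hτ]
  have hsum : σ.cycleType.sum = τ.cycleType.sum := by
    have hσle := σ.sum_cycleType_le
    have hτle := τ.sum_cycleType_le
    rw [Perm.card_fixedPoints, Perm.card_fixedPoints] at h
    omega
  rw [Perm.cycleType_of_pow_prime_eq_one hσ, Perm.cycleType_of_pow_prime_eq_one hτ,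
    Multiset.sum_replicate, Multiset.sum_replicate] at hsum
  rw [Nat.mul_right_cancel (Fact.out : p.Prime).pos hsum]

theorem card_fixedPoints_of_sq_eq_one {α : Type*} [Fintype α] [DecidableEq α] {σ : Perm α}
    (hσ : σ ^ 2 = 1) (hfix : (fixedPoints σ).Subsingleton) :
    Fintype.card (fixedPoints σ) = Fintype.card α % 2 := by
  have hle : Fintype.card (fixedPoints σ) ≤ 1 :=
    Fintype.card_le_one_iff_subsingleton.mpr hfix.coe_sort
  have hdvd := Perm.two_dvd_card_support hσ
  have hsupp := Finset.card_le_univ σ.support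
  rw [Perm.card_fixedPoints, Perm.sum_cycleType] at hle ⊢
  omega

variable {X Y : Type*} {σ : Perm X} {τ : Perm Y}

theorem exists_semiconj_equiv_of_sq_eq_one [Finite X] (e : X ≃ Y) (hσ : σ ^ 2 = 1)
    (hτ : τ ^ 2 = 1) (hσfix : (fixedPoints σ).Subsingleton)
    (hτfix : (fixedPoints τ).Subsingleton) : ∃ ψ : X ≃ Y, Semiconj ψ σ τ := by
  classical
  have := Fintype.ofFinite X
  have hτ' : e.symm.permCongr τ ^ 2 = 1 := by
    rw [← permCongrHom_coe, ← map_pow, hτ, map_one]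
  have hτfix' : (fixedPoints (e.symm.permCongr τ)).Subsingleton := fun x hx y hy ↦
    e.injective (hτfix (e.symm_apply_eq.mp hx) (e.symm_apply_eq.mp hy))
  obtain ⟨π, hπ⟩ := isConj_iff.mp <| isConj_of_pow_prime_eq_one (p := 2) hσ hτ' <| by
    rw [card_fixedPoints_of_sq_eq_one hσ hσfix, card_fixedPoints_of_sq_eq_one hτ' hτfix']
  refine ⟨π.trans e, fun x ↦ ?_⟩
  have hx : π (σ x) = e.symm (τ (e (π x))) := by simpa using Perm.congr_fun hπ (π x)
  simp [hx]

theorem exists_semiconj_equiv_comp_eq_of_sq_eq_one {γ : Type*} {f : X → γ} {g : Y → γ} [Finite X]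
    (e : X ≃ Y) (he : g ∘ e = f) (hf : f ∘ σ = f) (hg : g ∘ τ = g) (hσ : σ ^ 2 = 1)
    (hτ : τ ^ 2 = 1) (hσfix : (fixedPoints σ).Subsingleton)
    (hτfix : (fixedPoints τ).Subsingleton) : ∃ ψ : X ≃ Y, g ∘ ψ = f ∧ Semiconj ψ σ τ := by
  have hfiber (c : γ) : ∃ ψ : {x // f x = c} ≃ {y // g y = c},
      ∀ x hx, (ψ ⟨σ x, (congr_fun hf x).trans hx⟩ : Y) = τ (ψ ⟨x, hx⟩) := by
    have hσc (x : X) : f (σ x) = c ↔ f x = c := by rw [← comp_apply (f := f), hf]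
    have hτc (y : Y) : g (τ y) = c ↔ g y = c := by rw [← comp_apply (f := g), hg]
    let ec : {x // f x = c} ≃ {y // g y = c} :=
      e.subtypeEquiv fun x ↦ by rw [← he, comp_apply]
    obtain ⟨ψ, hψ⟩ := exists_semiconj_equiv_of_sq_eq_one ec
      (σ := σ.subtypePerm hσc) (τ := τ.subtypePerm hτc)
      (by ext; simp [Perm.subtypePerm_pow, hσ]) (by ext; simp [Perm.subtypePerm_pow, hτ])
      (fun x hx y hy ↦ Subtype.ext (hσfix (congr_arg Subtype.val hx) (congr_arg Subtype.val hy)))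
      (fun x hx y hy ↦ Subtype.ext (hτfix (congr_arg Subtype.val hx) (congr_arg Subtype.val hy)))
    exact ⟨ψ, fun x hx ↦ congr_arg Subtype.val (hψ ⟨x, hx⟩)⟩
  choose ψ hψ using hfiber
  refine ⟨ofFiberEquiv ψ, funext fun x ↦ ofFiberEquiv_map ψ x, fun x ↦ ?_⟩
  have hval (c : γ) (y : X) (hy : f y = c) : ofFiberEquiv ψ y = ψ c ⟨y, hy⟩ := by
    subst hy; rfl
  rw [hval _ _ (congr_fun hf x), hval _ _ rfl, hψ]

end Permutation

section Equivariance

variable {𝕜 V ι : Type*} [Field 𝕜] [AddCommGroup V] [Module 𝕜 V]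

theorem exists_equivariant_choice {α : Type*} {σ : ι → ι} (hσ : σ.Involutive) {τ : α → α}
    (hτ : τ.Involutive) {P : ι → α → Prop} (hP : ∀ i a, P i a → P (σ i) (τ a))
    (hex : ∀ i, ∃ a, P i a ∧ (σ i = i → τ a = a)) :
    ∃ f : ι → α, (∀ i, P i (f i)) ∧ Function.Semiconj f σ τ := by
  classical
  choose a ha hfix using hex
  let r : ι → ι → Prop := WellOrderingRel
  refine ⟨fun i ↦ if r i (σ i) ∨ σ i = i then a i else τ (a (σ i)), fun i ↦ ?_, fun i ↦ ?_⟩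
  · dsimp only
    split_ifs
    · exact ha i
    · simpa only [hσ i] using hP (σ i) _ (ha (σ i))
  · rcases trichotomous_of r i (σ i) with hi | hi | hi
    · have hne : σ i ≠ i := fun h ↦ irrefl_of r i (by rwa [h] at hi)
      simp [hi, hne.symm, hσ i, asymm_of r hi]
    · simp [← hi, hfix i hi.symm]
    · have hne : σ i ≠ i := fun h ↦ irrefl_of r i (by rwa [h] at hi)
      simp [hi, hne, hσ i, asymm_of r hi, hτ _]

theorem exists_linearEquiv_eqOn_of_iSupIndep [FiniteDimensional 𝕜 V] {W U : ι → Submodule 𝕜 V}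
    (hind : iSupIndep W) (hW : iSup W = ⊤) (hU : iSup U = ⊤) {φ : ι → Module.End 𝕜 V}
    (hφ : ∀ i, (W i).map (φ i) = U i) :
    ∃ k : V ≃ₗ[𝕜] V, ∀ i, ∀ v ∈ W i, k v = φ i v := by
  obtain ⟨f, hf⟩ := exists_linearMap_eqOn_of_iSupIndep hind hW φ
  have hsurj : LinearMap.range f = ⊤ := by
    refine eq_top_iff.mpr (hU ▸ iSup_le fun i ↦ ?_)
    rw [← hφ i, ← map_eq_map_of_eqOn (hf i)]
    exact LinearMap.map_le_range
  exact ⟨LinearEquiv.ofInjectiveEndo f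
    (LinearMap.injective_iff_surjective.mpr (LinearMap.range_eq_top.mp hsurj)), hf⟩

theorem exists_linearMap_map_eq {W U : Submodule 𝕜 V} [FiniteDimensional 𝕜 W]
    [FiniteDimensional 𝕜 U] (h : Module.finrank 𝕜 W = Module.finrank 𝕜 U) :
    ∃ φ : Module.End 𝕜 V, W.map φ = U ∧ LinearMap.range φ ≤ U := by
  let e := LinearEquiv.ofFinrankEq W U h
  obtain ⟨g, hg⟩ := (e : W →ₗ[𝕜] U).exists_extend
  refine ⟨U.subtype ∘ₗ g, ?_, ?_⟩
  · rw [Submodule.map_comp, ← W.range_subtype, ← LinearMap.range_comp, hg]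
    simp
  · exact (LinearMap.range_comp_le_range _ _).trans_eq U.range_subtype

theorem exists_linearEquiv_map_eq_commute [FiniteDimensional 𝕜 V] {W U : ι → Submodule 𝕜 V}
    (hind : iSupIndep W) (hW : iSup W = ⊤) (hU : iSup U = ⊤)
    (hdim : ∀ i, Module.finrank 𝕜 (W i) = Module.finrank 𝕜 (U i))
    {ε : V ≃ₗ[𝕜] V} (hε : Function.Involutive ε) {σ : ι → ι} (hσ : σ.Involutive)
    (hWε : ∀ i, (W i).map (ε : V →ₗ[𝕜] V) = W (σ i))
    (hUε : ∀ i, (U i).map (ε : V →ₗ[𝕜] V) = U (σ i))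
    (hfix : ∀ i, σ i = i → ∃ φ : Module.End 𝕜 V, (W i).map φ = U i ∧ ε.conj φ = φ) :
    ∃ k : V ≃ₗ[𝕜] V, (∀ i, (W i).map (k : V →ₗ[𝕜] V) = U i) ∧ Function.Commute k ε := by
  have hsymm (v : V) : ε.symm v = ε v := ε.symm_apply_eq.mpr (hε v).symm
  have hconj : Function.Involutive ε.conj := fun φ ↦ by
    ext v
    simp [LinearEquiv.conj_apply_apply, hsymm, hε _]
  have hmap (i : ι) (φ : Module.End 𝕜 V) (hφ : (W i).map φ = U i) :
      (W (σ i)).map (ε.conj φ) = U (σ i) := by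
    rw [LinearEquiv.conj_apply, Submodule.map_comp, Submodule.map_comp, ← hWε, ← hUε, ← hφ,
      ← Submodule.map_comp (ε : V →ₗ[𝕜] V), LinearEquiv.symm_comp, Submodule.map_id]
  have hex (i : ι) : ∃ φ : Module.End 𝕜 V, (W i).map φ = U i ∧ (σ i = i → ε.conj φ = φ) := by
    by_cases hi : σ i = i
    · obtain ⟨φ, hφ, hφε⟩ := hfix i hi
      exact ⟨φ, hφ, fun _ ↦ hφε⟩
    · obtain ⟨φ, hφ, -⟩ := exists_linearMap_map_eq (hdim i)
      exact ⟨φ, hφ, fun h ↦ absurd h hi⟩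
  obtain ⟨φ, hφ, hφε⟩ := exists_equivariant_choice hσ hconj hmap hex
  obtain ⟨k, hk⟩ := exists_linearEquiv_eqOn_of_iSupIndep hind hW hU hφ
  refine ⟨k, fun i ↦ (map_eq_map_of_eqOn (hk i)).trans (hφ i), fun v ↦ ?_⟩
  have hcomm : k.toLinearMap ∘ₗ ε.toLinearMap = ε.toLinearMap ∘ₗ k.toLinearMap := by
    refine linearMap_ext_of_iSup_eq_top hW fun i v hv ↦ ?_
    have hεv : ε v ∈ W (σ i) := hWε i ▸ Submodule.mem_map_of_mem hv
    simp [hk i v hv, hk (σ i) _ hεv, hφε i, LinearEquiv.conj_apply_apply]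
  exact LinearMap.congr_fun hcomm v

end Equivariance

section Reflection

variable {𝕜 V : Type*} [Field 𝕜] [AddCommGroup V] [Module 𝕜 V] {A B : Submodule 𝕜 V}
  {s : Module.End 𝕜 V}

theorem two_smul_projection_sub_one_involutive (h : IsCompl A B) :
    Function.Involutive ((2 : 𝕜) • A.projection B h - 1 : Module.End 𝕜 V) := fun v ↦ by
  simp only [LinearMap.sub_apply, LinearMap.smul_apply, Module.End.one_apply, map_sub, map_smul,
    A.projection_apply_of_mem_left h (A.projection_apply_mem h v)]
  module

/-- The involution `ε` that is the identity on `A` and minus the identity on the complement `B`;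
conjugation by it is the involution `θ`. -/
noncomputable def reflection (h : IsCompl A B) : V ≃ₗ[𝕜] V :=
  LinearEquiv.ofInvolutive _ (two_smul_projection_sub_one_involutive h)

theorem reflection_apply (h : IsCompl A B) (v : V) :
    reflection h v = (2 : 𝕜) • A.projection B h v - v :=
  rfl

theorem reflection_involutive (h : IsCompl A B) : Function.Involutive (reflection h) :=
  two_smul_projection_sub_one_involutive h

theorem reflection_symm (h : IsCompl A B) : (reflection h).symm = reflection h :=
  rfl

theorem reflection_apply_of_mem_left (h : IsCompl A B) {v : V} (hv : v ∈ A) :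
    reflection h v = v := by
  rw [reflection_apply, A.projection_apply_of_mem_left h hv]
  module

theorem reflection_apply_of_mem_right (h : IsCompl A B) {v : V} (hv : v ∈ B) :
    reflection h v = -v := by
  rw [reflection_apply, (A.projection_apply_eq_zero_iff h).mpr hv]
  module

theorem reflection_apply_eq_self_iff [NeZero (2 : 𝕜)] (h : IsCompl A B) {v : V} :
    reflection h v = v ↔ v ∈ A := by
  rw [reflection_apply, sub_eq_iff_eq_add, ← two_smul 𝕜, smul_right_inj two_ne_zero,
    Submodule.projection_eq_self_iff]

theorem reflection_apply_eq_neg_iff [NeZero (2 : 𝕜)] (h : IsCompl A B) {v : V} :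
    reflection h v = -v ↔ v ∈ B := by
  rw [reflection_apply, sub_eq_neg_self, smul_eq_zero_iff_right two_ne_zero,
    Submodule.projection_apply_eq_zero_iff]

theorem map_eq_self_of_commute_reflection [NeZero (2 : 𝕜)] (h : IsCompl A B) {k : V ≃ₗ[𝕜] V}
    (hk : Function.Commute k (reflection h)) :
    A.map (k : V →ₗ[𝕜] V) = A ∧ B.map (k : V →ₗ[𝕜] V) = B := by
  have hA (v : V) : k v ∈ A ↔ v ∈ A := by
    rw [← reflection_apply_eq_self_iff h, ← hk v, k.injective.eq_iff,
      reflection_apply_eq_self_iff h]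
  have hB (v : V) : k v ∈ B ↔ v ∈ B := by
    rw [← reflection_apply_eq_neg_iff h, ← hk v, ← map_neg, k.injective.eq_iff,
      reflection_apply_eq_neg_iff h]
  constructor <;> ext v
  · rw [Submodule.mem_map_equiv, ← hA, k.apply_symm_apply]
  · rw [Submodule.mem_map_equiv, ← hB, k.apply_symm_apply]

/-- `s` interchanges `A` and `B`, that is, `s` lies in `p = Hom(A, B) ⊕ Hom(B, A)`. -/
def Swaps (s : Module.End 𝕜 V) (A B : Submodule 𝕜 V) : Prop :=
  A.map s ≤ B ∧ B.map s ≤ A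

theorem Swaps.symm (hs : Swaps s A B) : Swaps s B A :=
  And.symm hs

theorem Swaps.apply_mem_right (hs : Swaps s A B) {v : V} (hv : v ∈ A) : s v ∈ B :=
  hs.1 (Submodule.mem_map_of_mem hv)

theorem Swaps.conj_reflection (hs : Swaps s A B) (h : IsCompl A B) :
    (reflection h).conj s = -s := by
  refine LinearMap.ext_on_codisjoint h.codisjoint (fun v hv ↦ ?_) fun v hv ↦ ?_ <;>
    rw [LinearEquiv.conj_apply_apply, reflection_symm]
  · rw [reflection_apply_of_mem_left h hv, LinearMap.neg_apply,
      reflection_apply_of_mem_right h (hs.apply_mem_right hv)]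
  · rw [reflection_apply_of_mem_right h hv, map_neg, map_neg, LinearMap.neg_apply,
      reflection_apply_of_mem_left h (hs.symm.apply_mem_right hv)]

theorem Swaps.map_reflection_eigenspace (hs : Swaps s A B) (h : IsCompl A B) (c : 𝕜) :
    (s.eigenspace c).map (reflection h : V →ₗ[𝕜] V) = s.eigenspace (-c) := by
  rw [← eigenspace_conj, hs.conj_reflection h]
  ext v
  simp [neg_eq_iff_eq_neg]

theorem Swaps.hasEigenvalue_neg_iff (hs : Swaps s A B) (h : IsCompl A B) {c : 𝕜} :
    s.HasEigenvalue (-c) ↔ s.HasEigenvalue c := by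
  simp [Module.End.hasEigenvalue_iff, ← hs.map_reflection_eigenspace h]

theorem Swaps.inf_ker_sup_inf_ker (hs : Swaps s A B) (h : IsCompl A B) :
    A ⊓ LinearMap.ker s ⊔ B ⊓ LinearMap.ker s = LinearMap.ker s := by
  refine le_antisymm (sup_le inf_le_right inf_le_right) fun v hv ↦ ?_
  obtain ⟨a, b, ha, hb, rfl⟩ := Submodule.codisjoint_iff_exists_add_eq.mp h.codisjoint v
  have hab : s a = -s b := by simpa [add_eq_zero_iff_eq_neg] using hv
  have hsa : s a = 0 := Submodule.disjoint_def.mp h.disjoint _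
    (hab ▸ neg_mem (hs.symm.apply_mem_right hb)) (hs.apply_mem_right ha)
  have hsb : s b = 0 := by simpa [hsa] using hab
  exact Submodule.add_mem_sup ⟨ha, hsa⟩ ⟨hb, hsb⟩

end Reflection

section Kernel

variable {𝕜 V : Type*} [Field 𝕜] [AddCommGroup V] [Module 𝕜 V] {A B : Submodule 𝕜 V}
  {s u : Module.End 𝕜 V}

open Module (finrank)

theorem IsDiagonalizable.disjoint_range_ker (hs : IsDiagonalizable s) :
    Disjoint (LinearMap.range s) (LinearMap.ker s) := by
  have hrange : LinearMap.range s ≤ ⨆ c ≠ 0, s.eigenspace c := by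
    rw [LinearMap.range_eq_map, ← hs, Submodule.map_iSup]
    refine iSup_le fun c ↦ ?_
    rintro _ ⟨v, hv, rfl⟩
    rw [Module.End.mem_eigenspace_iff.mp hv]
    rcases eq_or_ne c 0 with rfl | hc
    · simp
    · exact Submodule.smul_mem _ c (le_iSup₂ (f := fun c (_ : c ≠ 0) ↦ s.eigenspace c) c hc hv)
  rw [← Module.End.eigenspace_zero]
  exact (s.eigenspaces_iSupIndep 0).symm.mono_left hrange

theorem finrank_map_add_finrank_inf_ker {V' : Type*} [AddCommGroup V'] [Module 𝕜 V']
    (f : V →ₗ[𝕜] V') (W : Submodule 𝕜 V) [FiniteDimensional 𝕜 W] :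
    finrank 𝕜 (W.map f) + finrank 𝕜 ↥(W ⊓ LinearMap.ker f) = finrank 𝕜 W := by
  rw [← LinearMap.finrank_range_add_finrank_ker (f.domRestrict W), LinearMap.range_domRestrict,
    LinearMap.ker_domRestrict, ← Submodule.map_comap_subtype, Submodule.finrank_map_subtype_eq]

variable [FiniteDimensional 𝕜 V]

theorem IsDiagonalizable.finrank_map_le (hs : IsDiagonalizable s) (hAB : A.map s ≤ B) :
    finrank 𝕜 (A.map s) ≤ finrank 𝕜 (B.map s) := by
  have hinf : A.map s ⊓ LinearMap.ker s = ⊥ :=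
    (hs.disjoint_range_ker.mono_left LinearMap.map_le_range).eq_bot
  have hmap := finrank_map_add_finrank_inf_ker s (A.map s)
  rw [hinf, finrank_bot, add_zero] at hmap
  exact hmap ▸ Submodule.finrank_mono (Submodule.map_mono hAB)

theorem Swaps.finrank_inf_ker_add (hs : Swaps s A B) (hdiag : IsDiagonalizable s) :
    finrank 𝕜 ↥(A ⊓ LinearMap.ker s) + finrank 𝕜 B =
      finrank 𝕜 ↥(B ⊓ LinearMap.ker s) + finrank 𝕜 A := by
  have hA := finrank_map_add_finrank_inf_ker s A
  have hB := finrank_map_add_finrank_inf_ker s B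
  have hmap := (hdiag.finrank_map_le hs.1).antisymm (hdiag.finrank_map_le hs.2)
  omega

theorem Swaps.finrank_inf_ker_add_finrank_inf_ker (hs : Swaps s A B) (h : IsCompl A B) :
    finrank 𝕜 ↥(A ⊓ LinearMap.ker s) + finrank 𝕜 ↥(B ⊓ LinearMap.ker s) =
      finrank 𝕜 (LinearMap.ker s) := by
  have hinf : A ⊓ LinearMap.ker s ⊓ (B ⊓ LinearMap.ker s) = ⊥ :=
    (h.disjoint.mono inf_le_left inf_le_left).eq_bot
  rw [← Submodule.finrank_sup_add_finrank_inf_eq, hs.inf_ker_sup_inf_ker h, hinf, finrank_bot,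
    add_zero]

theorem Swaps.finrank_inf_ker_eq (hs : Swaps s A B) (hu : Swaps u A B) (h : IsCompl A B)
    (hsdiag : IsDiagonalizable s) (hudiag : IsDiagonalizable u)
    (hker : finrank 𝕜 (LinearMap.ker s) = finrank 𝕜 (LinearMap.ker u)) :
    finrank 𝕜 ↥(A ⊓ LinearMap.ker s) = finrank 𝕜 ↥(A ⊓ LinearMap.ker u) := by
  have hs₁ := hs.finrank_inf_ker_add hsdiag
  have hu₁ := hu.finrank_inf_ker_add hudiag
  have hs₂ := hs.finrank_inf_ker_add_finrank_inf_ker h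
  have hu₂ := hu.finrank_inf_ker_add_finrank_inf_ker h
  omega

theorem exists_map_eq_conj_reflection (h : IsCompl A B) {W U : Submodule 𝕜 V}
    (hW : A ⊓ W ⊔ B ⊓ W = W) (hU : A ⊓ U ⊔ B ⊓ U = U)
    (hA : finrank 𝕜 ↥(A ⊓ W) = finrank 𝕜 ↥(A ⊓ U))
    (hB : finrank 𝕜 ↥(B ⊓ W) = finrank 𝕜 ↥(B ⊓ U)) :
    ∃ φ : Module.End 𝕜 V, W.map φ = U ∧ (reflection h).conj φ = φ := by
  obtain ⟨α, hαW, hα⟩ := exists_linearMap_map_eq hA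
  obtain ⟨β, hβW, hβ⟩ := exists_linearMap_map_eq hB
  let φ : Module.End 𝕜 V := α ∘ₗ A.projection B h + β ∘ₗ B.projection A h.symm
  have hφA (v : V) (hv : v ∈ A) : φ v = α v := by
    simp [φ, A.projection_apply_of_mem_left h hv, (B.projection_apply_eq_zero_iff h.symm).mpr hv]
  have hφB (v : V) (hv : v ∈ B) : φ v = β v := by
    simp [φ, B.projection_apply_of_mem_left h.symm hv, (A.projection_apply_eq_zero_iff h).mpr hv]
  refine ⟨φ, ?_, ?_⟩
  · calc W.map φ = (A ⊓ W).map φ ⊔ (B ⊓ W).map φ := by rw [← Submodule.map_sup, hW]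
      _ = (A ⊓ W).map α ⊔ (B ⊓ W).map β :=
        congr_arg₂ _ (map_eq_map_of_eqOn fun v hv ↦ hφA v hv.1)
          (map_eq_map_of_eqOn fun v hv ↦ hφB v hv.1)
      _ = U := by rw [hαW, hβW, hU]
  · refine LinearMap.ext_on_codisjoint h.codisjoint (fun v hv ↦ ?_) fun v hv ↦ ?_ <;>
      rw [LinearEquiv.conj_apply_apply, reflection_symm]
    · have hαv : α v ∈ A := (hα (LinearMap.mem_range_self α v)).1
      rw [reflection_apply_of_mem_left h hv, hφA v hv, reflection_apply_of_mem_left h hαv]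
    · have hβv : β v ∈ B := (hβ (LinearMap.mem_range_self β v)).1
      rw [reflection_apply_of_mem_right h hv, map_neg, hφB v hv, map_neg,
        reflection_apply_of_mem_right h hβv, neg_neg]

theorem Swaps.exists_map_ker_eq_conj_reflection (hs : Swaps s A B) (hu : Swaps u A B)
    (h : IsCompl A B) (hsdiag : IsDiagonalizable s) (hudiag : IsDiagonalizable u)
    (hker : finrank 𝕜 (LinearMap.ker s) = finrank 𝕜 (LinearMap.ker u)) :
    ∃ φ : Module.End 𝕜 V,
      (LinearMap.ker s).map φ = LinearMap.ker u ∧ (reflection h).conj φ = φ :=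
  exists_map_eq_conj_reflection h (hs.inf_ker_sup_inf_ker h) (hu.inf_ker_sup_inf_ker h)
    (hs.finrank_inf_ker_eq hu h hsdiag hudiag hker)
    (hs.symm.finrank_inf_ker_eq hu.symm h.symm hsdiag hudiag hker)

end Kernel

section Negation

variable {𝕜 V : Type*} [Field 𝕜] [AddCommGroup V] [Module 𝕜 V] {A B : Submodule 𝕜 V}
  {s u : Module.End 𝕜 V}

open Module (finrank)

/-- Negation `c ↦ -c` as a permutation of the eigenvalues of an element of `p`. -/
def Swaps.negPerm (hs : Swaps s A B) (h : IsCompl A B) : Equiv.Perm s.Eigenvalues :=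
  (Equiv.neg 𝕜).subtypePerm fun _ ↦ hs.hasEigenvalue_neg_iff h

theorem Swaps.negPerm_involutive (hs : Swaps s A B) (h : IsCompl A B) :
    Function.Involutive (hs.negPerm h) :=
  fun c ↦ Subtype.ext (neg_neg c.val)

theorem Swaps.negPerm_sq (hs : Swaps s A B) (h : IsCompl A B) : hs.negPerm h ^ 2 = 1 :=
  Equiv.ext fun c ↦ by rw [sq, Equiv.Perm.mul_apply, hs.negPerm_involutive h, Equiv.Perm.one_apply]

theorem Swaps.map_reflection_eigenspace_negPerm (hs : Swaps s A B) (h : IsCompl A B)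
    (c : s.Eigenvalues) :
    (s.eigenspace c).map (reflection h : V →ₗ[𝕜] V) = s.eigenspace (hs.negPerm h c) :=
  hs.map_reflection_eigenspace h c

theorem Swaps.finrank_eigenspace_comp_negPerm (hs : Swaps s A B) (h : IsCompl A B) :
    (fun c : s.Eigenvalues ↦ finrank 𝕜 (s.eigenspace c)) ∘ hs.negPerm h =
      fun c : s.Eigenvalues ↦ finrank 𝕜 (s.eigenspace c) :=
  funext fun c ↦ by
    rw [Function.comp_apply, ← hs.map_reflection_eigenspace_negPerm,
      LinearEquiv.finrank_map_eq (reflection h)]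

variable [NeZero (2 : 𝕜)]

theorem Swaps.val_eq_zero_of_negPerm_eq_self (hs : Swaps s A B) (h : IsCompl A B)
    {c : s.Eigenvalues} (hc : hs.negPerm h c = c) : (c : 𝕜) = 0 := by
  have hneg : -(c : 𝕜) = c := congr_arg Subtype.val hc
  have htwo : 2 * (c : 𝕜) = 0 := by linear_combination -hneg
  exact (mul_eq_zero_iff_left two_ne_zero).mp htwo

theorem Swaps.subsingleton_fixedPoints_negPerm (hs : Swaps s A B) (h : IsCompl A B) :
    (Function.fixedPoints (hs.negPerm h)).Subsingleton := fun _ hc _ hd ↦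
  Subtype.ext ((hs.val_eq_zero_of_negPerm_eq_self h hc).trans
    (hs.val_eq_zero_of_negPerm_eq_self h hd).symm)

variable [FiniteDimensional 𝕜 V]

theorem Swaps.exists_equiv_eigenvalues_semiconj (hs : Swaps s A B) (hu : Swaps u A B)
    (h : IsCompl A B) (σ : s.Eigenvalues ≃ u.Eigenvalues)
    (hσ : ∀ c : s.Eigenvalues, finrank 𝕜 (s.eigenspace c) = finrank 𝕜 (u.eigenspace (σ c))) :
    ∃ ψ : s.Eigenvalues ≃ u.Eigenvalues,
      (∀ c : s.Eigenvalues, finrank 𝕜 (s.eigenspace c) = finrank 𝕜 (u.eigenspace (ψ c))) ∧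
        Function.Semiconj ψ (hs.negPerm h) (hu.negPerm h) := by
  obtain ⟨ψ, hψ, hψneg⟩ := exists_semiconj_equiv_comp_eq_of_sq_eq_one σ
    (g := fun d : u.Eigenvalues ↦ finrank 𝕜 (u.eigenspace d)) (funext fun c ↦ (hσ c).symm)
    (hs.finrank_eigenspace_comp_negPerm h) (hu.finrank_eigenspace_comp_negPerm h)
    (hs.negPerm_sq h) (hu.negPerm_sq h)
    (hs.subsingleton_fixedPoints_negPerm h) (hu.subsingleton_fixedPoints_negPerm h)
  exact ⟨ψ, fun c ↦ (congr_fun hψ c).symm, hψneg⟩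

theorem Swaps.exists_linearEquiv_map_eigenspace_commute (hs : Swaps s A B) (hu : Swaps u A B)
    (h : IsCompl A B) (hsdiag : IsDiagonalizable s) (hudiag : IsDiagonalizable u)
    (ψ : s.Eigenvalues ≃ u.Eigenvalues)
    (hψ : ∀ c : s.Eigenvalues, finrank 𝕜 (s.eigenspace c) = finrank 𝕜 (u.eigenspace (ψ c)))
    (hψneg : Function.Semiconj ψ (hs.negPerm h) (hu.negPerm h)) :
    ∃ k : V ≃ₗ[𝕜] V,
      (∀ c : s.Eigenvalues, (s.eigenspace c).map (k : V →ₗ[𝕜] V) = u.eigenspace (ψ c)) ∧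
        Function.Commute k (reflection h) := by
  have htop : ⨆ c, u.eigenspace (ψ c) = ⊤ :=
    (ψ.iSup_comp (g := fun d : u.Eigenvalues ↦ u.eigenspace d)).trans hudiag.iSup_eigenvalues
  refine exists_linearEquiv_map_eq_commute (iSupIndep_eigenvalues_eigenspace s)
    hsdiag.iSup_eigenvalues htop hψ (reflection_involutive h) (hs.negPerm_involutive h)
    (hs.map_reflection_eigenspace_negPerm h) (fun c ↦ ?_) fun c hc ↦ ?_
  · rw [hψneg c, hu.map_reflection_eigenspace_negPerm]
  · have hc₀ : (c : 𝕜) = 0 := hs.val_eq_zero_of_negPerm_eq_self h hc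
    have hψc₀ : (ψ c : 𝕜) = 0 :=
      hu.val_eq_zero_of_negPerm_eq_self h ((hψneg c).symm.trans (congr_arg ψ hc))
    have hker := hψ c
    rw [hc₀, hψc₀, Module.End.eigenspace_zero, Module.End.eigenspace_zero] at hker ⊢
    exact hs.exists_map_ker_eq_conj_reflection hu h hsdiag hudiag hker

end Negation

section Bridge

variable {𝕂 : Type*} [Field 𝕂] {N : ℕ}

theorem isSemisimpleE_iff_isDiagonalizable {x : EndV 𝕂 N} :
    IsSemisimpleE x ↔ IsDiagonalizable x := by
  simp_rw [IsSemisimpleE, IsDiagonalizable, Module.End.eigenspace_def]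

theorem cent_eq_centralizer (x : EndV 𝕂 N) : cent x = Set.centralizer {x} := by
  ext z
  rw [mem_centralizer_singleton_iff_commute]
  exact eq_comm

end Bridge

end SymmetricPairAIII

theorem property_L_typeAIII_general {𝕜 V : Type*} [Field 𝕜] [NeZero (2 : 𝕜)] [AddCommGroup V]
    [Module 𝕜 V] [FiniteDimensional 𝕜 V] {A B : Submodule 𝕜 V} (h : IsCompl A B)
    {s u : Module.End 𝕜 V} (hs : Swaps s A B) (hu : Swaps u A B)
    (hsdiag : IsDiagonalizable s) (hudiag : IsDiagonalizable u) :
    (∃ g : V ≃ₗ[𝕜] V, g.conj '' Set.centralizer {s} = Set.centralizer {u}) ↔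
      ∃ k : V ≃ₗ[𝕜] V, (A.map (k : V →ₗ[𝕜] V) = A ∧ B.map (k : V →ₗ[𝕜] V) = B) ∧
        k.conj '' Set.centralizer {s} = Set.centralizer {u} := by
  refine ⟨fun ⟨g, hg⟩ ↦ ?_, fun ⟨k, _, hk⟩ ↦ ⟨k, hk⟩⟩
  obtain ⟨σ, hσ⟩ := (hsdiag.image_conj_centralizer_eq_iff hudiag g).mp hg
  obtain ⟨ψ, hψ, hψneg⟩ := hs.exists_equiv_eigenvalues_semiconj hu h σ fun c ↦ by
    rw [← hσ, LinearEquiv.finrank_map_eq g]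
  obtain ⟨k, hkmap, hkcomm⟩ :=
    hs.exists_linearEquiv_map_eigenspace_commute hu h hsdiag hudiag ψ hψ hψneg
  exact ⟨k, map_eq_self_of_commute_reflection h hkcomm,
    (hsdiag.image_conj_centralizer_eq_iff hudiag k).mpr ⟨ψ, hkmap⟩⟩

theorem property_L_typeAIII {𝕂 : Type*} [Field 𝕂] [IsAlgClosed 𝕂] [CharZero 𝕂] {N : ℕ}
    (Va Vb : Submodule 𝕂 (Fin N → 𝕂)) (hVab : IsCompl Va Vb)
    (s u : EndV 𝕂 N)
    (hs : s ∈ pAIII Va Vb) (hu : u ∈ pAIII Va Vb)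
    (hss : IsSemisimpleE s) (hus : IsSemisimpleE u) :
    (∃ g : (EndV 𝕂 N)ˣ, conjAct g '' cent s = cent u) ↔
    (∃ k ∈ KAIII Va Vb, conjAct k '' cent s = cent u) := by
  have hgen := property_L_typeAIII_general hVab hs hu
    (isSemisimpleE_iff_isDiagonalizable.mp hss) (isSemisimpleE_iff_isDiagonalizable.mp hus)
  let e := LinearMap.GeneralLinearGroup.generalLinearEquiv 𝕂 (Fin N → 𝕂)
  rw [cent_eq_centralizer, cent_eq_centralizer]
  -- Both `conjAct` and the condition defining `K` correspond under `e` by definitional unfolding.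
  exact (e.toEquiv.exists_congr fun _ ↦ Iff.rfl).trans
    (hgen.trans (e.toEquiv.exists_congr fun _ ↦ Iff.rfl).symm)
end

section
/- In type AI, the intersection of the GL(V)-orbit of a semisimple χ-self-adjoint element with p is a single SO(χ)-orbit: if χ is a nondegenerate symmetric bilinear form on V and s, s′ ∈ p are semisimple with s′ = g s g⁻¹ for some g ∈ GL(V), then there exists k ∈ Isom(χ) with det k = 1 such that s′ = k s k⁻¹. -/
/-! In type AI, the intersection of the `GL(V)`-orbit of a semisimple `χ`-self-adjoint
element with `p` is a single `SO(χ)`-orbit. -/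

namespace SymmetricPairAI

variable {𝕂 : Type*} [Field 𝕂] {N : ℕ}

/-- `gl(V)` for `V = 𝕂^N`. -/
abbrev EndV (𝕂 : Type*) [Field 𝕂] (N : ℕ) := Module.End 𝕂 (Fin N → 𝕂)

/-- Semisimple = diagonalizable: the eigenspaces span `V`. -/
def IsSemisimpleE (x : EndV 𝕂 N) : Prop :=
  (⨆ c : 𝕂, LinearMap.ker (x - c • (1 : EndV 𝕂 N))) = ⊤

/-- `x` is self-adjoint for the bilinear form `χ`:  `χ(xu, v) = χ(u, xv)`. -/
def IsSelfAdjointB (χ : (Fin N → 𝕂) →ₗ[𝕂] (Fin N → 𝕂) →ₗ[𝕂] 𝕂) (x : EndV 𝕂 N) : Prop :=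
  ∀ u v : Fin N → 𝕂, χ (x u) v = χ u (x v)

/-- `g ∈ GL(V)` is an isometry of `χ`. -/
def IsIsometryB (χ : (Fin N → 𝕂) →ₗ[𝕂] (Fin N → 𝕂) →ₗ[𝕂] 𝕂) (g : (EndV 𝕂 N)ˣ) : Prop :=
  ∀ u v : Fin N → 𝕂, χ ((g : EndV 𝕂 N) u) ((g : EndV 𝕂 N) v) = χ u v

/-- The conjugation action `g.z = g z g⁻¹` of `GL(V)` on `gl(V)`. -/
def conjAct (g : (EndV 𝕂 N)ˣ) (z : EndV 𝕂 N) : EndV 𝕂 N :=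
  (g : EndV 𝕂 N) * z * ((g⁻¹ : (EndV 𝕂 N)ˣ) : EndV 𝕂 N)

end SymmetricPairAI

open SymmetricPairAI

/-!
By self-adjointness the eigenspaces of `s` are mutually orthogonal. Orthogonal bases of the
eigenspaces therefore form an orthogonal basis of `V`, whose vectors are anisotropic because `χ`
is nondegenerate; dividing them by square roots gives an orthonormal eigenbasis of `s`. Since `s`
and `s'` are conjugate, their eigenspaces have the same dimensions, so `s'` has an orthonormal
eigenbasis with the same eigenvalues, and the map carrying one basis to the other is an isometry
conjugating `s` to `s'`. Its determinant `δ` satisfies `δ * δ = 1`, and multiplying one vector of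
the second basis by `δ` turns the determinant into `1`.
-/

namespace SymmetricPairAI

open Module

section CommRing

variable {R M ι : Type*} [CommRing R] [AddCommGroup M] [Module R M]
  {B : LinearMap.BilinForm R M} {f f' : End R M} {μ : ι → R} {b b' : Basis ι R M}

/-- `b` is a basis of eigenvectors of `f`, with eigenvalues `μ`, whose members are pairwise
orthogonal for the bilinear form `B`. -/
structure IsOrthogonalEigenbasis (B : LinearMap.BilinForm R M) (f : End R M) (μ : ι → R)
    (b : Basis ι R M) : Prop where
  isOrthoᵢ : B.IsOrthoᵢ b
  map_eq_smul : ∀ i, f (b i) = μ i • b i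

/-- An orthogonal eigenbasis all of whose members `v` satisfy `B v v = 1`. No positivity of `B` is
meant. -/
structure IsOrthonormalEigenbasis (B : LinearMap.BilinForm R M) (f : End R M) (μ : ι → R)
    (b : Basis ι R M) : Prop extends IsOrthogonalEigenbasis B f μ b where
  apply_self : ∀ i, B (b i) (b i) = 1

theorem IsOrthogonalEigenbasis.unitsSMul (hb : IsOrthogonalEigenbasis B f μ b) (w : ι → Rˣ) :
    IsOrthogonalEigenbasis B f μ (b.unitsSMul w) where
  isOrthoᵢ i j hij := by
    have hbij : B (b i) (b j) = 0 := hb.isOrthoᵢ hij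
    simp [Function.onFun, Basis.unitsSMul_apply, Units.smul_def, hbij]
  map_eq_smul i := by
    rw [Basis.unitsSMul_apply, Units.smul_def, map_smul, hb.map_eq_smul, smul_comm]

namespace IsOrthonormalEigenbasis

theorem unitsSMul (hb : IsOrthonormalEigenbasis B f μ b) {w : ι → Rˣ}
    (hw : ∀ i, w i * w i = 1) : IsOrthonormalEigenbasis B f μ (b.unitsSMul w) where
  toIsOrthogonalEigenbasis := hb.toIsOrthogonalEigenbasis.unitsSMul w
  apply_self i := by
    simp [Basis.unitsSMul_apply, Units.smul_def, hb.apply_self, ← Units.val_mul, hw]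

theorem apply_eq_apply (hb : IsOrthonormalEigenbasis B f μ b)
    (hb' : IsOrthonormalEigenbasis B f' μ b') (i j : ι) : B (b' i) (b' j) = B (b i) (b j) := by
  obtain rfl | hij := eq_or_ne i j
  · rw [hb.apply_self, hb'.apply_self]
  · exact (hb'.isOrthoᵢ hij).trans (hb.isOrthoᵢ hij).symm

theorem apply_equiv (hb : IsOrthonormalEigenbasis B f μ b)
    (hb' : IsOrthonormalEigenbasis B f' μ b') (u v : M) :
    B (b.equiv b' (.refl ι) u) (b.equiv b' (.refl ι) v) = B u v := by
  let k : M →ₗ[R] M := b.equiv b' (.refl ι)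
  suffices B.comp k k = B from LinearMap.congr_fun₂ this u v
  refine LinearMap.ext_basis b b fun i j => ?_
  simpa [k] using hb.apply_eq_apply hb' i j

theorem conj_equiv (hb : IsOrthonormalEigenbasis B f μ b)
    (hb' : IsOrthonormalEigenbasis B f' μ b') : (b.equiv b' (.refl ι)).conj f = f' := by
  refine b'.ext fun i => ?_
  simp [LinearEquiv.conj_apply, hb.map_eq_smul, hb'.map_eq_smul]

variable [Fintype ι] [DecidableEq ι]

theorem toMatrix_eq_one (hb : IsOrthonormalEigenbasis B f μ b) :
    LinearMap.BilinForm.toMatrix b B = 1 := by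
  ext i j
  obtain rfl | hij := eq_or_ne i j
  · simp [hb.apply_self]
  · simpa [hij, Function.onFun] using hb.isOrthoᵢ hij

theorem det_mul_self_eq_one (hb : IsOrthonormalEigenbasis B f μ b)
    (hb' : IsOrthonormalEigenbasis B f' μ b') : b.det b' * b.det b' = 1 := by
  have h_gram := LinearMap.BilinForm.toMatrix_mul_basis_toMatrix b b' B
  rw [hb.toMatrix_eq_one, hb'.toMatrix_eq_one, mul_one] at h_gram
  simpa [Basis.det_apply] using congrArg Matrix.det h_gram

theorem exists_det_eq_one (hb : IsOrthonormalEigenbasis B f μ b)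
    (hb' : IsOrthonormalEigenbasis B f' μ b') :
    ∃ c : Basis ι R M, IsOrthonormalEigenbasis B f' μ c ∧ b.det c = 1 := by
  obtain _ | ⟨⟨i₀⟩⟩ := isEmpty_or_nonempty ι
  · exact ⟨b', hb', by simp⟩
  have hδ := hb.det_mul_self_eq_one hb'
  let δ : Rˣ := ⟨b.det b', b.det b', hδ, hδ⟩
  let w : ι → Rˣ := Function.update 1 i₀ δ
  have hw (i : ι) : w i * w i = 1 := by
    obtain rfl | hi := eq_or_ne i i₀
    · simpa [w] using Units.ext hδ
    · simp [w, hi]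
  refine ⟨b'.unitsSMul w, hb'.unitsSMul hw, ?_⟩
  have h_prod : ∏ i, w i = δ := by simp [w, Finset.prod_update_of_mem]
  rw [← b.det_mul_det b', Basis.det_unitsSMul_self, ← Units.coe_prod, h_prod]
  exact hδ

end IsOrthonormalEigenbasis

theorem eigenspace_conj {M' : Type*} [AddCommGroup M'] [Module R M'] (g : M ≃ₗ[R] M')
    (f : End R M) (c : R) :
    (g.conj f).eigenspace c = (f.eigenspace c).map (g : M →ₗ[R] M') := by
  ext x
  rw [Submodule.mem_map_equiv, End.mem_eigenspace_iff, End.mem_eigenspace_iff,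
    LinearEquiv.conj_apply_apply, ← LinearEquiv.eq_symm_apply, map_smul]

theorem iSup_eigenspace_conj_eq_top {M' : Type*} [AddCommGroup M'] [Module R M']
    (g : M ≃ₗ[R] M') (hf : ⨆ c, f.eigenspace c = ⊤) : ⨆ c, (g.conj f).eigenspace c = ⊤ := by
  simp only [eigenspace_conj, ← Submodule.map_iSup, hf, Submodule.map_top, LinearEquiv.range]

theorem apply_eq_zero_of_mem_eigenspace [IsDomain R] (hf : B.IsSelfAdjoint f) {c d : R}
    (hcd : c ≠ d) {u v : M} (hu : u ∈ f.eigenspace c) (hv : v ∈ f.eigenspace d) : B u v = 0 := by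
  rw [End.mem_eigenspace_iff] at hu hv
  have h_adj : c * B u v = d * B u v := by simpa [hu, hv] using hf u v
  exact (mul_eq_mul_right_iff.1 h_adj).resolve_left hcd

end CommRing

section Field

variable {K V : Type*} [Field K] [AddCommGroup V] [Module K V]
  {B : LinearMap.BilinForm K V} {f : End K V}

theorem exists_isOrthogonalEigenbasis [Invertible (2 : K)] [FiniteDimensional K V]
    (hB : B.IsSymm) (hf : B.IsSelfAdjoint f) (hf_top : ⨆ c, f.eigenspace c = ⊤) :
    ∃ b : Basis (Σ c, Fin (finrank K (f.eigenspace c))) K V,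
      IsOrthogonalEigenbasis B f Sigma.fst b := by
  classical
  choose e he using fun c => LinearMap.BilinForm.exists_orthogonal_basis
    (LinearMap.BilinForm.isSymm_iff.1 (hB.restrict (f.eigenspace c)))
  have h_internal := DirectSum.isInternal_submodule_of_iSupIndep_of_iSup_eq_top
    f.eigenspaces_iSupIndep hf_top
  obtain ⟨b, hb⟩ : ∃ b : Basis (Σ c, Fin (finrank K (f.eigenspace c))) K V,
      ∀ i, b i = e i.1 i.2 := ⟨h_internal.collectedBasis e, by simp⟩
  have hb_mem (i) : b i ∈ f.eigenspace i.1 := hb i ▸ (e i.1 i.2).2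
  refine ⟨b, ?_, fun i => End.mem_eigenspace_iff.1 (hb_mem i)⟩
  rintro ⟨c, i⟩ ⟨d, j⟩ hij
  obtain rfl | hcd := eq_or_ne c d
  · have h_ne : i ≠ j := fun h => hij (h ▸ rfl)
    simpa [Function.onFun, hb] using he c h_ne
  · exact apply_eq_zero_of_mem_eigenspace hf hcd (hb_mem ⟨c, i⟩) (hb_mem ⟨d, j⟩)

theorem exists_units_smul_apply_self_eq_one (hK : ∀ a : K, IsSquare a) {v : V}
    (hv : B v v ≠ 0) : ∃ w : Kˣ, B (w • v) (w • v) = 1 := by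
  obtain ⟨r, hr⟩ := hK (B v v)
  have hr₀ : r ≠ 0 := by
    rintro rfl
    simp [hr] at hv
  refine ⟨(Units.mk0 r hr₀)⁻¹, ?_⟩
  simp [Units.smul_def, hr, hr₀]

theorem exists_isOrthonormalEigenbasis [Invertible (2 : K)] [FiniteDimensional K V]
    (hK : ∀ a : K, IsSquare a) (hB : B.IsSymm) (hB_sep : B.SeparatingLeft)
    (hf : B.IsSelfAdjoint f) (hf_top : ⨆ c, f.eigenspace c = ⊤) {d : K → ℕ}
    (hd : ∀ c, finrank K (f.eigenspace c) = d c) :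
    ∃ b : Basis (Σ c, Fin (d c)) K V, IsOrthonormalEigenbasis B f Sigma.fst b := by
  obtain rfl : (fun c => finrank K (f.eigenspace c)) = d := funext hd
  obtain ⟨b, hb⟩ := exists_isOrthogonalEigenbasis hB hf hf_top
  choose w hw using fun i => exists_units_smul_apply_self_eq_one hK
    (hb.isOrthoᵢ.not_isOrtho_basis_self_of_separatingLeft hB_sep i)
  exact ⟨b.unitsSMul w, hb.unitsSMul w, fun i => by rw [Basis.unitsSMul_apply, hw]⟩

end Field

end SymmetricPairAI

open Module in
theorem semisimple_orbit_inter_p_typeAI_general {K V : Type*} [Field K] [Invertible (2 : K)]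
    (hK : ∀ a : K, IsSquare a) [AddCommGroup V] [Module K V] [FiniteDimensional K V]
    {B : LinearMap.BilinForm K V} (hB : B.IsSymm) (hB_sep : B.SeparatingLeft)
    {s s' : End K V} (hs : B.IsSelfAdjoint s) (hs' : B.IsSelfAdjoint s')
    (hs_top : ⨆ c, s.eigenspace c = ⊤) (g : V ≃ₗ[K] V) (hg : s' = g.conj s) :
    ∃ k : V ≃ₗ[K] V, (∀ u v, B (k u) (k v) = B u v) ∧
      LinearMap.det (k : End K V) = 1 ∧ s' = k.conj s := by
  classical
  have h_finrank (c : K) : finrank K (s'.eigenspace c) = finrank K (s.eigenspace c) := by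
    rw [hg, eigenspace_conj, LinearEquiv.finrank_map_eq]
  have hs'_top : ⨆ c, s'.eigenspace c = ⊤ := hg ▸ iSup_eigenspace_conj_eq_top g hs_top
  obtain ⟨b, hb⟩ := exists_isOrthonormalEigenbasis hK hB hB_sep hs hs_top fun _ => rfl
  obtain ⟨b', hb'⟩ := exists_isOrthonormalEigenbasis hK hB hB_sep hs' hs'_top h_finrank
  have := FiniteDimensional.fintypeBasisIndex b
  obtain ⟨c, hc, h_det⟩ := hb.exists_det_eq_one hb'
  exact ⟨b.equiv c (.refl _), hb.apply_equiv hc, by rw [Basis.det_basis, h_det],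
    (hb.conj_equiv hc).symm⟩

theorem semisimple_orbit_inter_p_typeAI {𝕂 : Type*} [Field 𝕂] [IsAlgClosed 𝕂] [CharZero 𝕂]
    {N : ℕ} (χ : (Fin N → 𝕂) →ₗ[𝕂] (Fin N → 𝕂) →ₗ[𝕂] 𝕂)
    (hχnd : ∀ u : Fin N → 𝕂, (∀ v : Fin N → 𝕂, χ u v = 0) → u = 0)
    (hχsym : ∀ u v : Fin N → 𝕂, χ u v = χ v u)
    (s s' : EndV 𝕂 N)
    (hs : IsSelfAdjointB χ s) (hs' : IsSelfAdjointB χ s')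
    (hss : IsSemisimpleE s) (hss' : IsSemisimpleE s')
    (g : (EndV 𝕂 N)ˣ) (hg : s' = conjAct g s) :
    ∃ k : (EndV 𝕂 N)ˣ, IsIsometryB χ k ∧ LinearMap.det (k : EndV 𝕂 N) = 1 ∧
      s' = conjAct k s := by
  have hs_top : ⨆ c, s.eigenspace c = ⊤ := by
    simpa only [IsSemisimpleE, Module.End.eigenspace_def] using hss
  obtain ⟨k, hk, h_det, hks⟩ := semisimple_orbit_inter_p_typeAI_general
    IsAlgClosed.exists_eq_mul_self ⟨hχsym⟩ hχnd hs hs' hs_top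
    (LinearMap.GeneralLinearGroup.toLinearEquiv g) hg
  exact ⟨LinearMap.GeneralLinearGroup.ofLinearEquiv k, hk, h_det, hks⟩
end

section
/- In types AI and AII, isometry-conjugacy and GL-conjugacy agree on p: two χ-self-adjoint elements x, y ∈ p are conjugate under Isom(χ) if and only if they are conjugate under GL(V). -/
/-! In types AI and AII, isometry-conjugacy and `GL`-conjugacy agree on the space `p`
of `χ`-self-adjoint endomorphisms. -/

namespace SymmetricPairAIandAII

variable {𝕂 : Type*} [Field 𝕂] {N : ℕ}

/-- `gl(V)` for `V = 𝕂^N`. -/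
abbrev EndV (𝕂 : Type*) [Field 𝕂] (N : ℕ) := Module.End 𝕂 (Fin N → 𝕂)

/-- `x` is self-adjoint for the bilinear form `χ`:  `χ(xu, v) = χ(u, xv)`. -/
def IsSelfAdjointB (χ : (Fin N → 𝕂) →ₗ[𝕂] (Fin N → 𝕂) →ₗ[𝕂] 𝕂) (x : EndV 𝕂 N) : Prop :=
  ∀ u v : Fin N → 𝕂, χ (x u) v = χ u (x v)

/-- `g ∈ GL(V)` is an isometry of `χ`. -/
def IsIsometryB (χ : (Fin N → 𝕂) →ₗ[𝕂] (Fin N → 𝕂) →ₗ[𝕂] 𝕂) (g : (EndV 𝕂 N)ˣ) : Prop :=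
  ∀ u v : Fin N → 𝕂, χ ((g : EndV 𝕂 N) u) ((g : EndV 𝕂 N) v) = χ u v

/-- The conjugation action `g.z = g z g⁻¹` of `GL(V)` on `gl(V)`. -/
def conjAct (g : (EndV 𝕂 N)ˣ) (z : EndV 𝕂 N) : EndV 𝕂 N :=
  (g : EndV 𝕂 N) * z * ((g⁻¹ : (EndV 𝕂 N)ˣ) : EndV 𝕂 N)

end SymmetricPairAIandAII

open SymmetricPairAIandAII

/-! Let `*` be the adjoint involution of `χ`. If `y = g x g⁻¹` with `x` and `y` self-adjoint, then
`s = g* g` is invertible, self-adjoint and commutes with `x`. Square roots in the residue fields of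
the Artinian ring `𝕂[s]` lift by Newton iteration to a square root `h ∈ 𝕂[s]` of `s`. Being a
polynomial in `s`, `h` is again self-adjoint and commutes with `x`, so `k = g h⁻¹` still conjugates
`x` to `y`, and `k* k = h⁻¹ s h⁻¹ = 1`. -/

section CommutativeSquareRoot

variable {A : Type*} [CommRing A] {a : A}

theorem isSquare_of_isSquare_mk_nilradical (h2 : IsUnit (2 : A)) (ha : IsUnit a)
    (hsq : IsSquare (Ideal.Quotient.mk (nilradical A) a)) : IsSquare a := by
  obtain ⟨b', hb'⟩ := hsq
  obtain ⟨b, rfl⟩ := Ideal.Quotient.mk_surjective b'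
  have hnil : IsNilpotent (b ^ 2 - a) := by
    rw [← mem_nilradical, ← Ideal.Quotient.eq_zero_iff_mem, map_sub, map_pow, hb', pow_two,
      sub_self]
  have hb : IsUnit b := by
    have hsq_unit : IsUnit (b ^ 2) := by
      simpa using hnil.isUnit_add_left_of_commute ha (Commute.all _ _)
    exact (isUnit_pow_iff two_ne_zero).mp hsq_unit
  obtain ⟨r, ⟨-, hr⟩, -⟩ := Polynomial.existsUnique_nilpotent_sub_and_aeval_eq_zero
    (P := (Polynomial.X ^ 2 - Polynomial.C a : Polynomial A)) (x := b)
    (by simpa using hnil) (by simpa [one_add_one_eq_two] using h2.mul hb)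
  exact ⟨r, by simpa [sub_eq_zero, pow_two, eq_comm] using hr⟩

theorem isSquare_of_forall_isSquare_mk_maximal [IsArtinianRing A] (h2 : IsUnit (2 : A))
    (ha : IsUnit a)
    (hsq : ∀ I : MaximalSpectrum A, IsSquare (Ideal.Quotient.mk I.asIdeal a)) : IsSquare a := by
  choose b hb using hsq
  refine isSquare_of_isSquare_mk_nilradical h2 ha
    ⟨(IsArtinianRing.quotNilradicalEquivPi A).symm b, ?_⟩
  apply (IsArtinianRing.quotNilradicalEquivPi A).injective
  rw [map_mul, AlgEquiv.apply_symm_apply]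
  exact funext hb

theorem isSquare_of_isUnit_of_isSepClosed (K : Type*) [Field K] [IsSepClosed K]
    [NeZero (2 : K)] [Algebra K A] [FiniteDimensional K A] (ha : IsUnit a) : IsSquare a := by
  have : IsArtinianRing A := .of_finite K A
  have h2 : IsUnit (2 : A) := by
    simpa only [map_ofNat] using (IsUnit.mk0 (2 : K) two_ne_zero).map (algebraMap K A)
  refine isSquare_of_forall_isSquare_mk_maximal h2 ha fun I => ?_
  let _ : Field (A ⧸ I.asIdeal) := Ideal.Quotient.field I.asIdeal
  have : IsSepClosed (A ⧸ I.asIdeal) := Algebra.IsAlgebraic.isSepClosed (F := K)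
  have : NeZero (2 : A ⧸ I.asIdeal) :=
    ⟨by simpa only [map_ofNat] using (h2.map (Ideal.Quotient.mk I.asIdeal)).ne_zero⟩
  exact IsSepClosed.exists_eq_mul_self _

end CommutativeSquareRoot

section Involution

variable {K A : Type*} [Field K] [Ring A] [Algebra K A]

theorem exists_mem_adjoin_mul_self_eq [IsSepClosed K] [NeZero (2 : K)] [FiniteDimensional K A]
    {s : A} (hs : IsUnit s) : ∃ h ∈ Algebra.adjoin K {s}, h * h = s := by
  let s' : Algebra.adjoin K {s} := ⟨s, Algebra.self_mem_adjoin_singleton K s⟩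
  have hs' : IsUnit s' := by
    refine IsArtinianRing.isUnit_of_nonZeroDivisor_of_isIntegral' (R := K) ?_
    exact comap_nonZeroDivisors_le_of_injective (f := (Algebra.adjoin K {s}).subtype)
      Subtype.val_injective hs.mem_nonZeroDivisors
  obtain ⟨h, hh⟩ := isSquare_of_isUnit_of_isSepClosed K hs'
  exact ⟨h, h.2, congrArg Subtype.val hh.symm⟩

theorem isSelfAdjoint_of_mem_adjoin_singleton {R S : Type*} [CommSemiring R] [StarRing R]
    [TrivialStar R] [Semiring S] [StarRing S] [Algebra R S] [StarModule R S] {s h : S}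
    (hs : IsSelfAdjoint s) (hh : h ∈ Algebra.adjoin R {s}) : IsSelfAdjoint h := by
  rw [Algebra.adjoin_singleton_eq_range_aeval] at hh
  obtain ⟨p, rfl⟩ := hh
  rw [AlgHom.toRingHom_eq_coe, RingHom.coe_coe, Polynomial.aeval_eq_sum_range]
  exact isSelfAdjoint_sum _ fun i _ => (IsSelfAdjoint.all (p.coeff i)).smul (hs.pow i)

theorem commute_star_mul_self_of_semiconjBy {S : Type*} [Semigroup S] [StarMul S] {x y g : S}
    (hx : IsSelfAdjoint x) (hy : IsSelfAdjoint y) (hg : SemiconjBy g x y) :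
    Commute (star g * g) x := by
  have hg' : SemiconjBy (star g) y x := by
    simpa only [SemiconjBy, star_mul, hx.star_eq, hy.star_eq] using (congrArg star hg.eq).symm
  exact hg'.mul_left hg

variable (K) in
theorem exists_unitary_semiconjBy_of_isConj [IsSepClosed K] [NeZero (2 : K)]
    [FiniteDimensional K A] [StarRing K] [TrivialStar K] [StarRing A] [StarModule K A] {x y : A}
    (hx : IsSelfAdjoint x) (hy : IsSelfAdjoint y) (hxy : IsConj x y) :
    ∃ k : unitary A, SemiconjBy (k : A) x y := by
  obtain ⟨g, hg⟩ := hxy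
  obtain ⟨h, hh_mem, hh⟩ :=
    exists_mem_adjoin_mul_self_eq (K := K) (g.isUnit.star.mul g.isUnit)
  have hh_star : IsSelfAdjoint h :=
    isSelfAdjoint_of_mem_adjoin_singleton (IsSelfAdjoint.star_mul_self _) hh_mem
  have hh_comm : Commute h x := (Algebra.commute_of_mem_adjoin_singleton_of_commute hh_mem
    (commute_star_mul_self_of_semiconjBy hx hy hg).symm).symm
  obtain ⟨h, rfl⟩ : IsUnit h := isUnit_mul_self_iff.mp (hh ▸ g.isUnit.star.mul g.isUnit)
  have hk : (g * ↑h⁻¹ : A) ∈ unitary A :=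
    (Units.mul_inv_mem_unitary g h).mpr (Units.ext (by simp [hh_star.star_eq, hh]))
  exact ⟨⟨_, hk⟩, hg.mul_left hh_comm.units_inv_left⟩

end Involution

section AdjointPair

variable {R M : Type*} [CommRing R] [AddCommGroup M] [Module R M] {B : LinearMap.BilinForm R M}

theorem isAdjointPair_swap_of_isSymm_or_isAlt (hB : B.IsSymm ∨ B.IsAlt) {f g : M → M}
    (hfg : B.IsAdjointPair B f g) : B.IsAdjointPair B g f := by
  intro u v
  rcases hB with hB | hB
  · calc B (g u) v = B v (g u) := hB.eq _ _
      _ = B (f v) u := (hfg v u).symm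
      _ = B u (f v) := hB.eq _ _
  · calc B (g u) v = -B v (g u) := (LinearMap.IsAlt.neg hB _ _).symm
      _ = -B (f v) u := by rw [hfg v u]
      _ = B u (f v) := LinearMap.IsAlt.neg hB _ _

theorem isOrthogonal_of_isAdjointPair_of_leftInverse {f g : M → M}
    (hfg : B.IsAdjointPair B f g) (hinv : Function.LeftInverse f g) : B.IsOrthogonal g :=
  fun u v => by rw [← hfg (g u) v, hinv u]

end AdjointPair

section AdjointInvolution

variable {K V : Type*} [Field K] [AddCommGroup V] [Module K V] [FiniteDimensional K V]
  {B : LinearMap.BilinForm K V}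

/-- The adjoint involution of a nondegenerate symmetric or alternating form, as a star structure on
the endomorphism ring. -/
noncomputable abbrev adjointStarRing (hnd : B.Nondegenerate) (hB : B.IsSymm ∨ B.IsAlt) :
    StarRing (Module.End K V) where
  star := B.leftAdjointOfNondegenerate hnd
  star_involutive f := ((B.isAdjointPair_iff_eq_of_nondegenerate hnd _ _).mp <|
    isAdjointPair_swap_of_isSymm_or_isAlt hB <|
      B.isAdjointPairLeftAdjointOfNondegenerate hnd f).symm
  star_mul f g := ((B.isAdjointPair_iff_eq_of_nondegenerate hnd _ _).mp <|
    (B.isAdjointPairLeftAdjointOfNondegenerate hnd g).mul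
      (B.isAdjointPairLeftAdjointOfNondegenerate hnd f)).symm
  star_add f g := ((B.isAdjointPair_iff_eq_of_nondegenerate hnd _ _).mp <|
    (B.isAdjointPairLeftAdjointOfNondegenerate hnd f).add
      (B.isAdjointPairLeftAdjointOfNondegenerate hnd g)).symm

end AdjointInvolution

theorem isometry_conj_iff_GL_conj_on_p_general {K V : Type*} [Field K] [IsSepClosed K]
    [NeZero (2 : K)] [AddCommGroup V] [Module K V] [FiniteDimensional K V]
    (B : LinearMap.BilinForm K V) (hnd : B.SeparatingLeft) (hB : B.IsSymm ∨ B.IsAlt)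
    {x y : Module.End K V} (hx : B.IsSelfAdjoint x) (hy : B.IsSelfAdjoint y) :
    (∃ k : (Module.End K V)ˣ, B.IsOrthogonal (k : Module.End K V) ∧ y = k * x * ↑k⁻¹) ↔
      ∃ g : (Module.End K V)ˣ, y = g * x * ↑g⁻¹ := by
  refine ⟨fun ⟨k, _, hk⟩ => ⟨k, hk⟩, fun ⟨g, hg⟩ => ?_⟩
  have hB_nondeg : B.Nondegenerate :=
    (hB.elim (·.isRefl) (·.isRefl)).nondegenerate_iff_separatingLeft.mpr hnd
  let _ : StarRing K := starRingOfComm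
  have : TrivialStar K := ⟨fun _ => rfl⟩
  let _ : StarRing (Module.End K V) := adjointStarRing hB_nondeg hB
  have : StarModule K (Module.End K V) := ⟨fun c f =>
    ((B.isAdjointPair_iff_eq_of_nondegenerate hB_nondeg _ _).mp
      ((B.isAdjointPairLeftAdjointOfNondegenerate hB_nondeg f).smul c)).symm⟩
  have isSelfAdjoint_star {f : Module.End K V} (hf : B.IsSelfAdjoint f) : IsSelfAdjoint f :=
    ((B.isAdjointPair_iff_eq_of_nondegenerate hB_nondeg f f).mp hf).symm
  obtain ⟨k, hk⟩ := exists_unitary_semiconjBy_of_isConj K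
    (isSelfAdjoint_star hx) (isSelfAdjoint_star hy)
    ⟨g, (Units.eq_mul_inv_iff_mul_eq g).mp hg |>.symm⟩
  exact ⟨Unitary.toUnits k, isOrthogonal_of_isAdjointPair_of_leftInverse
    (B.isAdjointPairLeftAdjointOfNondegenerate hB_nondeg k) (LinearMap.congr_fun k.2.1),
    (Units.eq_mul_inv_iff_mul_eq (Unitary.toUnits k)).mpr hk.eq.symm⟩

theorem isometry_conj_iff_GL_conj_on_p {𝕂 : Type*} [Field 𝕂] [IsAlgClosed 𝕂] [CharZero 𝕂]
    {N : ℕ} (χ : (Fin N → 𝕂) →ₗ[𝕂] (Fin N → 𝕂) →ₗ[𝕂] 𝕂)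
    (hχnd : ∀ u : Fin N → 𝕂, (∀ v : Fin N → 𝕂, χ u v = 0) → u = 0)
    (hχ : (∀ u v : Fin N → 𝕂, χ u v = χ v u) ∨ (∀ u : Fin N → 𝕂, χ u u = 0))
    (x y : EndV 𝕂 N)
    (hx : IsSelfAdjointB χ x) (hy : IsSelfAdjointB χ y) :
    (∃ k : (EndV 𝕂 N)ˣ, IsIsometryB χ k ∧ y = conjAct k x) ↔
    (∃ g : (EndV 𝕂 N)ˣ, y = conjAct g x) :=
  isometry_conj_iff_GL_conj_on_p_general χ hχnd (hχ.imp_left (⟨·⟩)) hx hy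
end

section
/- In types AI and AII, the Jordan K-classes contained in the intersection of a Jordan G-class with p are conjugate under the isometry group: if x, y ∈ p are Jordan G-equivalent, i.e. g·g^x·g⁻¹ = g^y for some g ∈ GL(V), then there exists k ∈ Isom(χ) with k·p^x·k⁻¹ = p^y, where p^x := p ∩ g^x and p^y := p ∩ g^y. -/
/-! In types AI and AII, the Jordan `K`-classes contained in the intersection of a Jordan
`G`-class with `p` are conjugate under the isometry group of `χ`. -/

namespace SymmetricPairAIandAII

variable {𝕂 : Type*} [Field 𝕂] {N : ℕ}

/-- `p`, the space of `χ`-self-adjoint endomorphisms, as a subset of `gl(V)`. -/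
def pSet (χ : (Fin N → 𝕂) →ₗ[𝕂] (Fin N → 𝕂) →ₗ[𝕂] 𝕂) : Set (EndV 𝕂 N) :=
  {x | IsSelfAdjointB χ x}

/-- The centralizer `g^x` of `x` in `gl(V)`. -/
def cent (x : EndV 𝕂 N) : Set (EndV 𝕂 N) := {z | z * x = x * z}

end SymmetricPairAIandAII

open SymmetricPairAIandAII

/-! The endomorphism `g.x` has the same centralizer as `y`, so it lies in the double centralizer
of `y`, that is in `K[y]`; hence `g.x` is self-adjoint along with `y`. Then `x` is self-adjoint both
for `χ` and for its pullback `χ(g·, g·)`. Write the latter as `χ(s·, ·)`: `s` is invertible,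
`χ`-self-adjoint and commutes with `x`. A square root `h ∈ K[s]` of `s` has the same properties, so
`χ(g·, g·) = χ(h·, h·)`, and `k = g h⁻¹` is an isometry with `k.x = g.x`. -/

namespace SymmetricPairAIandAII

open Polynomial Pointwise ConjAct

theorem baer_quotient_self {R : Type*} [CommRing R] [IsDomain R] [IsPrincipalIdealRing R]
    {I : Ideal R} (hI : I ≠ ⊥) : Module.Baer (R ⧸ I) (R ⧸ I) := by
  intro J g
  obtain ⟨d, hd⟩ := IsPrincipalIdealRing.principal (J.comap (Ideal.Quotient.mk I))
  obtain ⟨m, rfl⟩ := IsPrincipalIdealRing.principal I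
  have mem_iff (r : R) : Ideal.Quotient.mk _ r ∈ J ↔ d ∣ r := by
    rw [← Ideal.mem_span_singleton, ← Ideal.submodule_span_eq, ← hd, Ideal.mem_comap]
  have hdJ : Ideal.Quotient.mk _ d ∈ J := (mem_iff d).2 dvd_rfl
  obtain ⟨e, he⟩ : d ∣ m := (mem_iff m).1 <| by
    rw [Ideal.Quotient.eq_zero_iff_mem.2 (Ideal.mem_span_singleton_self m)]
    exact J.zero_mem
  obtain ⟨c, hc⟩ := Ideal.Quotient.mk_surjective (g ⟨_, hdJ⟩)
  have he0 : e ≠ 0 := by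
    rintro rfl
    exact hI (by rw [he, mul_zero, Submodule.span_zero_singleton])
  -- `e * d = m` kills `g d`, so `m = e * d` divides `e * c`, and `g` is multiplication by `c / d`
  obtain ⟨t, rfl⟩ : d ∣ c := by
    suffices m ∣ e * c from (mul_dvd_mul_iff_left he0).1 (by rwa [mul_comm e d, ← he])
    rw [← Ideal.mem_span_singleton, ← Ideal.Quotient.eq_zero_iff_mem, map_mul, hc,
      ← smul_eq_mul, ← map_smul]
    have hzero : Ideal.Quotient.mk (Ideal.span {m}) e • (⟨_, hdJ⟩ : J) = 0 := by
      refine Subtype.ext ?_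
      change Ideal.Quotient.mk _ e * Ideal.Quotient.mk _ d = 0
      rw [← map_mul, mul_comm, ← he, Ideal.Quotient.eq_zero_iff_mem]
      exact Ideal.mem_span_singleton_self m
    exact (congrArg g hzero).trans g.map_zero
  refine ⟨LinearMap.toSpanSingleton _ _ (Ideal.Quotient.mk _ t), fun x hx ↦ ?_⟩
  obtain ⟨r, rfl⟩ := Ideal.Quotient.mk_surjective x
  obtain ⟨a, rfl⟩ := (mem_iff r).1 hx
  have hmul : (⟨_, hx⟩ : J) = Ideal.Quotient.mk (Ideal.span {m}) a • ⟨_, hdJ⟩ := by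
    refine Subtype.ext ?_
    change Ideal.Quotient.mk _ (d * a) = Ideal.Quotient.mk _ a * Ideal.Quotient.mk _ d
    rw [← map_mul, mul_comm]
  rw [hmul, map_smul, ← hc, LinearMap.toSpanSingleton_apply, smul_eq_mul, smul_eq_mul,
    ← map_mul, ← map_mul]
  congr 1
  ring

theorem exists_forall_eq_smul_of_commute_end {A M : Type*} [CommRing A] [AddCommGroup M]
    [Module A M] (hA : Module.Baer A A) {v : M}
    (hv : Function.Injective (LinearMap.toSpanSingleton A M v))
    {z : M → M} (hz : ∀ f : M →ₗ[A] M, Function.Commute f z) : ∃ a : A, ∀ w, z w = a • w := by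
  obtain ⟨φ, hφ⟩ := hA.extension_property _ hv LinearMap.id
  have hφv : φ v = 1 := by simpa using LinearMap.congr_fun hφ 1
  -- `φ(·) w` is an endomorphism that sends `v` to `w`
  refine ⟨φ (z v), fun w ↦ ?_⟩
  simpa [hφv] using (hz (φ.smulRight w) v).symm

theorem exists_forall_eq_smul_of_commute_end_of_annihilator_ne_bot {R M : Type*} [CommRing R]
    [IsDomain R] [IsPrincipalIdealRing R] [AddCommGroup M] [Module R M] [Module.Finite R M]
    (hM : Module.annihilator R M ≠ ⊥) {z : M → M}
    (hz : ∀ f : M →ₗ[R] M, Function.Commute f z) : ∃ r : R, ∀ w, z w = r • w := by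
  let := Module.quotientAnnihilator (R := R) (M := M)
  obtain ⟨v, hv⟩ := Module.exists_ker_toSpanSingleton_eq_annihilator R M
  have hv' : Function.Injective (LinearMap.toSpanSingleton (R ⧸ Module.annihilator R M) M v) := by
    rw [← LinearMap.ker_eq_bot, LinearMap.ker_eq_bot']
    intro a ha
    obtain ⟨r, rfl⟩ := Ideal.Quotient.mk_surjective a
    rw [Ideal.Quotient.eq_zero_iff_mem, ← hv]
    exact ha
  obtain ⟨a, ha⟩ := exists_forall_eq_smul_of_commute_end (baer_quotient_self hM) hv'
    fun f ↦ hz { f with map_smul' := fun r ↦ f.map_smul (Ideal.Quotient.mk _ r) }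
  obtain ⟨r, rfl⟩ := Ideal.Quotient.mk_surjective a
  exact ⟨r, ha⟩

theorem exists_aeval_eq_of_mem_centralizer_centralizer {K V : Type*} [Field K] [AddCommGroup V]
    [Module K V] [FiniteDimensional K V] {y z : Module.End K V}
    (hz : z ∈ Set.centralizer (Set.centralizer {y})) : ∃ p : K[X], aeval y p = z := by
  have hann : Module.annihilator K[X] (Module.AEval' y) ≠ ⊥ := by
    rw [← span_minpoly_eq_annihilator, Ne, Ideal.span_singleton_eq_bot]
    exact minpoly.ne_zero_of_finite K y
  have hcomm (f : Module.AEval' y →ₗ[K[X]] Module.AEval' y) : Function.Commute f z := by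
    let e := Module.AEval'.of y
    let f₀ : Module.End K V := e.symm.conj (f.restrictScalars K)
    have hf₀ : f₀ ∈ Set.centralizer {y} := by
      intro m hm
      rw [Set.mem_singleton_iff.1 hm]
      ext u
      change y (e.symm (f (e u))) = e.symm (f (e (y u)))
      rw [← Module.AEval'.X_smul_of, map_smul, Module.AEval'.of_symm_X_smul]
    exact fun u ↦ LinearMap.congr_fun (hz f₀ hf₀) u
  obtain ⟨p, hp⟩ := exists_forall_eq_smul_of_commute_end_of_annihilator_ne_bot hann hcomm
  exact ⟨p, LinearMap.ext fun u ↦ (hp u).symm⟩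

theorem isSquare_of_isSquare_quotient_nilradical {A : Type*} [CommRing A] (h2 : IsUnit (2 : A))
    {s : A} (hs : IsUnit s) (hsq : IsSquare (Ideal.Quotient.mk (nilradical A) s)) :
    IsSquare s := by
  obtain ⟨b, hb⟩ := hsq
  obtain ⟨a, rfl⟩ := Ideal.Quotient.mk_surjective b
  have hnil : IsNilpotent (a * a - s) := by
    rwa [← mem_nilradical, ← Ideal.Quotient.eq, map_mul, eq_comm]
  have ha : IsUnit a := by
    have := hnil.isUnit_add_right_of_commute hs (Commute.all _ _)
    rw [sub_add_cancel] at this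
    exact isUnit_of_mul_isUnit_left this
  obtain ⟨r, ⟨-, hr⟩, -⟩ := existsUnique_nilpotent_sub_and_aeval_eq_zero
    (P := X ^ 2 - C s) (x := a) (by simpa [sq] using hnil)
    (by simpa [one_add_one_eq_two] using h2.mul ha)
  exact ⟨r, by simpa [sub_eq_zero, sq, eq_comm] using hr⟩

theorem isSquare_of_isReduced {K A : Type*} [Field K] [IsAlgClosed K] [CommRing A] [Algebra K A]
    [Module.Finite K A] [IsReduced A] (a : A) : IsSquare a := by
  have := IsArtinianRing.of_finite K A
  have hres (m : MaximalSpectrum A) : IsSquare (Ideal.Quotient.mk m.asIdeal a) := by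
    obtain ⟨c, hc⟩ := (IsAlgClosed.algebraMap_bijective_of_isIntegral (k := K)).2
      (Ideal.Quotient.mk m.asIdeal a)
    exact hc ▸ IsSquare.map (algebraMap K _) (IsAlgClosed.exists_eq_mul_self c)
  choose b hb using hres
  let e := IsArtinianRing.equivPi A
  exact ⟨e.symm b, e.injective <| by
    rw [map_mul, e.apply_symm_apply]
    exact funext hb⟩

theorem isSquare_of_isUnit (K : Type*) {A : Type*} [Field K] [IsAlgClosed K] [NeZero (2 : K)]
    [CommRing A] [Algebra K A] [Module.Finite K A] {s : A} (hs : IsUnit s) : IsSquare s := by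
  refine isSquare_of_isSquare_quotient_nilradical ?_ hs ?_
  · simpa only [map_ofNat] using (IsUnit.mk0 (2 : K) two_ne_zero).map (algebraMap K A)
  · have : IsReduced (A ⧸ nilradical A) :=
      (Ideal.isRadical_iff_quotient_reduced _).1 (Ideal.radical_isRadical _)
    exact isSquare_of_isReduced (K := K) _

theorem exists_aeval_mul_self_eq {K E : Type*} [Field K] [IsAlgClosed K] [NeZero (2 : K)]
    [Ring E] [Algebra K E] {s : E} (hint : IsIntegral K s) (hs : IsUnit s) :
    ∃ p : K[X], aeval s p * aeval s p = s := by
  let A := Algebra.adjoin K {s}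
  have : Module.Finite K A := Algebra.finite_adjoin_simple_of_isIntegral hint
  let S : A := ⟨s, Algebra.self_mem_adjoin_singleton K s⟩
  have hS : IsUnit S := by
    refine IsArtinianRing.isUnit_of_isIntegral_of_nonZeroDivisor (R := K)
      (Algebra.IsIntegral.isIntegral S) ?_
    exact comap_nonZeroDivisors_le_of_injective (f := A.val) Subtype.val_injective
      hs.mem_nonZeroDivisors
  obtain ⟨⟨r, hr⟩, hrS⟩ := isSquare_of_isUnit K hS
  obtain ⟨p, rfl⟩ := (Algebra.adjoin_singleton_eq_range_aeval K s).le hr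
  exact ⟨p, congrArg Subtype.val hrS.symm⟩

theorem smul_centralizer {G M : Type*} [Group G] [Monoid M] [MulDistribMulAction G M] (g : G)
    (S : Set M) : g • S.centralizer = (g • S).centralizer := by
  ext z
  rw [Set.mem_smul_set_iff_inv_smul_mem, Set.mem_centralizer_iff, Set.mem_centralizer_iff,
    ← Set.image_smul, Set.forall_mem_image]
  refine forall₂_congr fun m _ ↦ ?_
  rw [← smul_left_cancel_iff g, smul_mul', smul_mul', smul_inv_smul]

section CommRing

variable {R M : Type*} [CommRing R] [AddCommGroup M] [Module R M] {B : LinearMap.BilinForm R M}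

theorem exists_eq_mul_apply_swap (hB : B.IsSymm ∨ B.IsAlt) :
    ∃ ε : R, ∀ u v, B u v = ε * B v u := by
  rcases hB with hsymm | halt
  · exact ⟨1, fun u v ↦ by rw [one_mul, hsymm.eq]⟩
  · exact ⟨-1, fun u v ↦ by rw [neg_one_mul, LinearMap.IsAlt.neg halt]⟩

theorem isSelfAdjoint_aeval {f : Module.End R M} (hf : B.IsSelfAdjoint f) (p : R[X]) :
    B.IsSelfAdjoint (aeval f p) := by
  induction p using Polynomial.induction_on with
  | C a =>
    rw [aeval_C, Algebra.algebraMap_eq_smul_one]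
    exact B.isAdjointPair_one.smul a
  | add p q hp hq =>
    rw [map_add]
    exact hp.add hq
  | monomial n a ih =>
    have hcomm : aeval f (C a * X ^ n) * f = f * aeval f (C a * X ^ n) := by
      have := ((Commute.all (C a * X ^ n) (X : R[X])).map (aeval f)).eq
      rwa [aeval_X] at this
    rw [pow_succ, ← mul_assoc, map_mul, aeval_X]
    have hmul := LinearMap.IsAdjointPair.mul ih hf
    rwa [← hcomm] at hmul

theorem isSelfAdjoint_compl₁₂_iff (g : (Module.End R M)ˣ) (z : Module.End R M) :
    (B.compl₁₂ g.1 g.1).IsSelfAdjoint z ↔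
      B.IsSelfAdjoint (toConjAct g • z : Module.End R M) := by
  have mul_inv_apply (u : M) : g.1 (g⁻¹.1 u) = u := LinearMap.congr_fun g.mul_inv u
  have inv_mul_apply (u : M) : g⁻¹.1 (g.1 u) = u := LinearMap.congr_fun g.inv_mul u
  rw [units_smul_def]
  refine ⟨fun hz u v ↦ ?_, fun hz u v ↦ ?_⟩
  · simpa [mul_inv_apply] using hz (g⁻¹.1 u) (g⁻¹.1 v)
  · simpa [inv_mul_apply] using hz (g.1 u) (g.1 v)

theorem smul_selfAdjointSubmodule {k : (Module.End R M)ˣ} (hk : B.IsOrthogonal k.1) :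
    toConjAct k • (B.selfAdjointSubmodule : Set (Module.End R M)) = B.selfAdjointSubmodule := by
  have hkB : B.compl₁₂ k.1 k.1 = B := LinearMap.ext₂ hk
  ext z
  rw [Set.mem_smul_set_iff_inv_smul_mem]
  calc B.IsSelfAdjoint ((toConjAct k)⁻¹ • z : Module.End R M)
      ↔ (B.compl₁₂ k.1 k.1).IsSelfAdjoint ((toConjAct k)⁻¹ • z : Module.End R M) := by rw [hkB]
    _ ↔ B.IsSelfAdjoint z := by rw [isSelfAdjoint_compl₁₂_iff, smul_inv_smul]

theorem nondegenerate_compl₁₂ (hB : B.Nondegenerate) (g : (Module.End R M)ˣ) :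
    (B.compl₁₂ g.1 g.1).Nondegenerate :=
  LinearMap.BilinForm.Nondegenerate.congr
    (LinearMap.GeneralLinearGroup.generalLinearEquiv R M g).symm hB

end CommRing

section Field

variable {K V : Type*} [Field K] [AddCommGroup V] [Module K V] [FiniteDimensional K V]
  {B C : LinearMap.BilinForm K V} {x y : Module.End K V}

theorem isSelfAdjoint_of_centralizer_eq (hy : B.IsSelfAdjoint y)
    (hxy : Set.centralizer {x} = Set.centralizer {y}) : B.IsSelfAdjoint x := by
  obtain ⟨p, rfl⟩ : ∃ p : K[X], aeval y p = x :=
    exists_aeval_eq_of_mem_centralizer_centralizer <| hxy ▸ Set.subset_centralizer_centralizer rfl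
  exact isSelfAdjoint_aeval hy p

theorem exists_unit_commute_apply_eq (hB : B.Nondegenerate) (hC : C.Nondegenerate) {ε : K}
    (hBε : ∀ u v, B u v = ε * B v u) (hCε : ∀ u v, C u v = ε * C v u)
    (hxB : B.IsSelfAdjoint x) (hxC : C.IsSelfAdjoint x) :
    ∃ s : (Module.End K V)ˣ, Commute s.1 x ∧ B.IsSelfAdjoint s.1 ∧
      ∀ u v, B (s.1 u) v = C u v := by
  let s : Module.End K V := C.symmCompOfNondegenerate B hB
  have hs (u v : V) : B (s u) v = C u v := C.symmCompOfNondegenerate_left_apply hB v u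
  have hunit : IsUnit s := by
    rw [LinearMap.isUnit_iff_ker_eq_bot, LinearMap.ker_eq_bot']
    exact fun u hu ↦ hC.1 u fun v ↦ by rw [← hs, hu, map_zero, LinearMap.zero_apply]
  refine ⟨hunit.unit, LinearMap.ext fun u ↦ ?_, fun u v ↦ ?_, hs⟩
  · refine sub_eq_zero.1 (hB.1 _ fun v ↦ ?_)
    rw [map_sub, LinearMap.sub_apply, sub_eq_zero]
    calc B (s (x u)) v = B (s u) (x v) := by rw [hs, hxC, hs]
      _ = B (x (s u)) v := (hxB _ _).symm
  · calc B (s u) v = ε * C v u := by rw [hs, hCε]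
      _ = B u (s v) := by rw [← hs, ← hBε]

theorem exists_unit_commute_apply_apply_eq [IsAlgClosed K] [NeZero (2 : K)]
    (hB : B.Nondegenerate) (hC : C.Nondegenerate) {ε : K}
    (hBε : ∀ u v, B u v = ε * B v u) (hCε : ∀ u v, C u v = ε * C v u)
    (hxB : B.IsSelfAdjoint x) (hxC : C.IsSelfAdjoint x) :
    ∃ h : (Module.End K V)ˣ, Commute h.1 x ∧ ∀ u v, B (h.1 u) (h.1 v) = C u v := by
  obtain ⟨s, hsx, hsB, hs⟩ := exists_unit_commute_apply_eq hB hC hBε hCε hxB hxC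
  obtain ⟨p, hp⟩ := exists_aeval_mul_self_eq (Algebra.IsIntegral.isIntegral (R := K) _) s.isUnit
  obtain ⟨h, hh⟩ : IsUnit (aeval s.1 p) :=
    ((Commute.refl _).isUnit_mul_iff.1 (hp.symm ▸ s.isUnit :)).1
  refine ⟨h, ?_, fun u v ↦ ?_⟩
  · rw [hh]
    exact (Algebra.commute_of_mem_adjoin_singleton_of_commute
      (aeval_mem_adjoin_singleton K _) hsx.symm).symm
  · calc B (h.1 u) (h.1 v) = B (h.1 (h.1 u)) v := by
          rw [hh]
          exact (isSelfAdjoint_aeval hsB p _ _).symm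
      _ = B (s.1 u) v := by rw [← hp, hh]; rfl
      _ = C u v := hs u v

theorem exists_isOrthogonal_smul_eq [IsAlgClosed K] [NeZero (2 : K)] (hB : B.Nondegenerate)
    (hBs : B.IsSymm ∨ B.IsAlt) (hx : B.IsSelfAdjoint x) {g : (Module.End K V)ˣ}
    (hgx : B.IsSelfAdjoint (toConjAct g • x : Module.End K V)) :
    ∃ k : (Module.End K V)ˣ, B.IsOrthogonal k.1 ∧ toConjAct k • x = toConjAct g • x := by
  obtain ⟨ε, hε⟩ := exists_eq_mul_apply_swap hBs
  obtain ⟨h, hhx, hh⟩ := exists_unit_commute_apply_apply_eq hB (nondegenerate_compl₁₂ hB g) hε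
    (fun u v ↦ hε (g.1 u) (g.1 v)) hx ((isSelfAdjoint_compl₁₂_iff g x).2 hgx)
  refine ⟨g * h⁻¹, fun u v ↦ ?_, ?_⟩
  · have mul_inv_apply (w : V) : h.1 (h⁻¹.1 w) = w := LinearMap.congr_fun h.mul_inv w
    exact (hh _ _).symm.trans (by rw [mul_inv_apply, mul_inv_apply])
  · have hfix : toConjAct h⁻¹ • x = x := by
      rw [toConjAct_inv, inv_smul_eq_iff, units_smul_def, ofConjAct_toConjAct, hhx.eq,
        Units.mul_inv_cancel_right]
    rw [toConjAct_mul, mul_smul, hfix]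

end Field

theorem cent_eq_centralizer {𝕂 : Type*} [Field 𝕂] {N : ℕ} (x : EndV 𝕂 N) :
    cent x = Set.centralizer {x} := by
  ext z
  simp only [Set.mem_centralizer_iff, Set.mem_singleton_iff, forall_eq]
  exact eq_comm

end SymmetricPairAIandAII

open Pointwise ConjAct in
theorem JordanKclasses_isometry_conjugate_typeAIandAII_general {K V : Type*} [Field K]
    [IsAlgClosed K] [NeZero (2 : K)] [AddCommGroup V] [Module K V] [FiniteDimensional K V]
    {B : LinearMap.BilinForm K V} (hB : B.Nondegenerate) (hBs : B.IsSymm ∨ B.IsAlt)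
    {x y : Module.End K V} (hx : B.IsSelfAdjoint x) (hy : B.IsSelfAdjoint y)
    (hxy : ∃ g : (Module.End K V)ˣ,
      toConjAct g • Set.centralizer {x} = Set.centralizer {y}) :
    ∃ k : (Module.End K V)ˣ, B.IsOrthogonal k.1 ∧
      toConjAct k • ((B.selfAdjointSubmodule : Set (Module.End K V)) ∩ Set.centralizer {x}) =
        (B.selfAdjointSubmodule : Set (Module.End K V)) ∩ Set.centralizer {y} := by
  obtain ⟨g, hg⟩ := hxy
  rw [smul_centralizer, Set.smul_set_singleton] at hg
  obtain ⟨k, hk, hkx⟩ :=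
    exists_isOrthogonal_smul_eq hB hBs hx (isSelfAdjoint_of_centralizer_eq hy hg)
  refine ⟨k, hk, ?_⟩
  rw [Set.smul_set_inter, smul_selfAdjointSubmodule hk, smul_centralizer,
    Set.smul_set_singleton, hkx, hg]

theorem JordanKclasses_isometry_conjugate_typeAIandAII {𝕂 : Type*} [Field 𝕂] [IsAlgClosed 𝕂]
    [CharZero 𝕂] {N : ℕ} (χ : (Fin N → 𝕂) →ₗ[𝕂] (Fin N → 𝕂) →ₗ[𝕂] 𝕂)
    (hχnd : ∀ u : Fin N → 𝕂, (∀ v : Fin N → 𝕂, χ u v = 0) → u = 0)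
    (hχ : (∀ u v : Fin N → 𝕂, χ u v = χ v u) ∨ (∀ u : Fin N → 𝕂, χ u u = 0))
    (x y : EndV 𝕂 N) (hx : x ∈ pSet χ) (hy : y ∈ pSet χ)
    (hJG : ∃ g : (EndV 𝕂 N)ˣ, conjAct g '' cent x = cent y) :
    ∃ k : (EndV 𝕂 N)ˣ, IsIsometryB χ k ∧
      conjAct k '' (pSet χ ∩ cent x) = pSet χ ∩ cent y := by
  simp only [cent_eq_centralizer] at hJG ⊢
  exact JordanKclasses_isometry_conjugate_typeAIandAII_general (B := χ)
    (LinearMap.BilinForm.Nondegenerate.ofSeparatingLeft hχnd) (hχ.imp_left fun h ↦ ⟨h⟩) hx hy hJG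
end

section
/- Let s ∈ gl(V) be semisimple with set of eigenvalues spec(s) and eigenspaces V_{s,c} := ker(s − c·Id). (a) Every g ∈ GL(V) normalizing the centralizer g^s (i.e. g·g^s·g⁻¹ = g^s) induces a permutation γ of spec(s) such that g·V_{s,c} = V_{s,γ(c)} for all c ∈ spec(s). (b) A permutation γ of spec(s) arises from such a g if and only if m(s,γ(c)) = m(s,c) for all c ∈ spec(s). -/
/-! For semisimple `s`, elements of `GL(V)` normalizing the centralizer `g^s` permute the
eigenspaces of `s`, and a permutation `γ` of `spec(s)` arises this way iff it preserves
the multiplicities. -/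

namespace EigenspaceSetup

variable {𝕂 : Type*} [Field 𝕂] {N : ℕ}

/-- `gl(V)` for `V = 𝕂^N`. -/
abbrev EndV (𝕂 : Type*) [Field 𝕂] (N : ℕ) := Module.End 𝕂 (Fin N → 𝕂)

/-- Semisimple = diagonalizable: the eigenspaces span `V`. -/
def IsSemisimpleE (x : EndV 𝕂 N) : Prop :=
  (⨆ c : 𝕂, LinearMap.ker (x - c • (1 : EndV 𝕂 N))) = ⊤

/-- The eigenspace `V_{s,c} = ker (s − c·Id)`. -/
def eigSp (s : EndV 𝕂 N) (c : 𝕂) : Submodule 𝕂 (Fin N → 𝕂) :=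
  LinearMap.ker (s - c • (1 : EndV 𝕂 N))

/-- The multiplicity `m(s,c) = dim ker (s − c·Id)`. -/
noncomputable def multE (s : EndV 𝕂 N) (c : 𝕂) : ℕ := Module.finrank 𝕂 (eigSp s c)

/-- The spectrum `spec(s) = {c : m(s,c) > 0}`. -/
def specE (s : EndV 𝕂 N) : Set 𝕂 := {c | 0 < multE s c}

/-- The centralizer `g^s` of `s` in `gl(V)`. -/
def cent (x : EndV 𝕂 N) : Set (EndV 𝕂 N) := {z | z * x = x * z}

/-- The conjugation action `g.z = g z g⁻¹` of `GL(V)` on `gl(V)`. -/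
def conjAct (g : (EndV 𝕂 N)ˣ) (z : EndV 𝕂 N) : EndV 𝕂 N :=
  (g : EndV 𝕂 N) * z * ((g⁻¹ : (EndV 𝕂 N)ˣ) : EndV 𝕂 N)

end EigenspaceSetup

open EigenspaceSetup

/-!
For diagonalizable `f`, the centralizer determines the set of nonzero eigenspaces: every rank-one
map `φ ⊗ x`, with `φ` a left and `x` a right eigenvector for the same eigenvalue, commutes with
`f`, and an `f'` commuting with all of these acts on each eigenspace of `f` by a scalar.
Conversely, an endomorphism commuting with `f` preserves its eigenspaces, hence commutes with every
map that is scalar on each of them. Conjugation by `g` carries the centralizer of `f` to that of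
`g f g⁻¹`, whose eigenspaces are the `g`-images of those of `f`. Hence `g` normalizes the
centralizer of `f` if and only if it permutes the eigenspaces of `f`, and a permutation of
eigenvalues is realized by gluing isomorphisms between eigenspaces of equal dimension.
-/

section Conjugation

open scoped Pointwise

theorem smul_centralizer {G M : Type*} [Group G] [Monoid M] [MulDistribMulAction G M]
    (g : G) (S : Set M) : g • S.centralizer = (g • S).centralizer := by
  ext x
  rw [Set.mem_smul_set_iff_inv_smul_mem, Set.mem_centralizer_iff, Set.mem_centralizer_iff,
    ← Set.image_smul, Set.forall_mem_image]
  refine forall₂_congr fun m _ => ?_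
  rw [← (MulAction.injective g).eq_iff]
  simp only [smul_mul', smul_inv_smul]

variable {R M : Type*} [CommRing R] [AddCommGroup M] [Module R M]

theorem map_units_injective (g : (Module.End R M)ˣ) :
    Function.Injective (Submodule.map (g : Module.End R M)) :=
  Submodule.map_injective_of_injective ((Module.End.isUnit_iff _).mp g.isUnit).injective

theorem eigenspace_toConjAct_smul (g : (Module.End R M)ˣ) (f : Module.End R M) (μ : R) :
    (ConjAct.toConjAct g • f).eigenspace μ =
      (f.eigenspace μ).map (g : Module.End R M) := by
  let e := LinearMap.GeneralLinearGroup.toLinearEquiv g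
  ext x
  rw [show (g : Module.End R M) = e from rfl, Submodule.mem_map_equiv,
    Module.End.mem_eigenspace_iff, Module.End.mem_eigenspace_iff, ← map_smul,
    LinearEquiv.eq_symm_apply]
  rfl

theorem iSup_eigenspace_toConjAct_smul (g : (Module.End R M)ˣ) {f : Module.End R M}
    (hf : ⨆ μ, f.eigenspace μ = ⊤) :
    ⨆ μ, (ConjAct.toConjAct g • f).eigenspace μ = ⊤ := by
  simp only [eigenspace_toConjAct_smul]
  rw [← Submodule.map_iSup, hf, Submodule.map_top, LinearMap.range_eq_top]
  exact ((Module.End.isUnit_iff _).mp g.isUnit).surjective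

/-- The set of nonzero eigenspaces of `f`, without their eigenvalues: the datum shared by all
diagonalizable endomorphisms with the same centralizer. -/
def eigenspaceSet (f : Module.End R M) : Set (Submodule R M) :=
  f.eigenspace '' {μ | f.HasEigenvalue μ}

theorem eigenspaceSet_toConjAct_smul (g : (Module.End R M)ˣ) (f : Module.End R M) :
    eigenspaceSet (ConjAct.toConjAct g • f) =
      Submodule.map (g : Module.End R M) '' eigenspaceSet f := by
  have map_eq_bot (p : Submodule R M) : p.map (g : Module.End R M) = ⊥ ↔ p = ⊥ := by
    rw [← (map_units_injective g).eq_iff (a := p), Submodule.map_bot]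
  simp only [eigenspaceSet, Set.image_image, Module.End.hasEigenvalue_iff,
    eigenspace_toConjAct_smul, ne_eq, map_eq_bot]

end Conjugation

section Centralizer

theorem mem_centralizer_singleton_iff_commute {M : Type*} [Mul M] {a b : M} :
    a ∈ Set.centralizer {b} ↔ Commute b a := by
  simp only [Set.mem_centralizer_iff, Set.mem_singleton_iff, forall_eq, commute_iff_eq]

section CommRing

variable {R M : Type*} [CommRing R] [AddCommGroup M] [Module R M] {f f' : Module.End R M}

theorem centralizer_subset_of_eigenspace_le (hf : ⨆ μ, f.eigenspace μ = ⊤)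
    (h : ∀ μ, f.HasEigenvalue μ → ∃ ν, f.eigenspace μ ≤ f'.eigenspace ν) :
    Set.centralizer {f} ⊆ Set.centralizer {f'} := by
  intro z hz
  rw [mem_centralizer_singleton_iff_commute] at hz ⊢
  have hle : ⨆ μ, f.eigenspace μ ≤ LinearMap.eqLocus (f' * z) (z * f') := by
    refine iSup_le fun μ => ?_
    obtain hμ | hμ := eq_or_ne (f.eigenspace μ) ⊥
    · exact hμ ▸ bot_le
    obtain ⟨ν, hν⟩ := h μ hμ
    intro x hx
    have hzx : z x ∈ f.eigenspace μ := Module.End.mapsTo_genEigenspace_of_comm hz μ 1 hx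
    rw [LinearMap.mem_eqLocus, Module.End.mul_apply, Module.End.mul_apply,
      Module.End.mem_eigenspace_iff.mp (hν hx), Module.End.mem_eigenspace_iff.mp (hν hzx), map_smul]
  exact LinearMap.ext fun x => hle (hf ▸ Submodule.mem_top)

theorem centralizer_subset_of_eigenspaceSet_subset (hf : ⨆ μ, f.eigenspace μ = ⊤)
    (h : eigenspaceSet f ⊆ eigenspaceSet f') : Set.centralizer {f} ⊆ Set.centralizer {f'} :=
  centralizer_subset_of_eigenspace_le hf fun _ hμ =>
    let ⟨ν, _, hν⟩ := h (Set.mem_image_of_mem _ hμ)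
    ⟨ν, hν.ge⟩

end CommRing

variable {K V : Type*} [Field K] [AddCommGroup V] [Module K V] {f f' : Module.End K V}

theorem exists_dual_eigenvector (hf : ⨆ μ, f.eigenspace μ = ⊤) {μ : K} {v : V}
    (hv : f.HasEigenvector μ v) :
    ∃ φ : Module.Dual K V, φ v ≠ 0 ∧ ∀ x, φ (f x) = μ * φ x := by
  have hv' : v ∉ ⨆ ν ≠ μ, f.eigenspace ν := fun h =>
    hv.2 (Submodule.disjoint_def.mp (f.eigenspaces_iSupIndep μ) v hv.1 h)
  obtain ⟨φ, hφv, hφ⟩ := Submodule.exists_le_ker_of_notMem hv'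
  have hle : ⨆ ν, f.eigenspace ν ≤ LinearMap.eqLocus (φ ∘ₗ f) (μ • φ) := by
    refine iSup_le fun ν x hx => ?_
    rw [LinearMap.mem_eqLocus, LinearMap.comp_apply, Module.End.mem_eigenspace_iff.mp hx,
      map_smul, LinearMap.smul_apply]
    obtain rfl | hν := eq_or_ne ν μ
    · rfl
    · have hφx : φ x = 0 := hφ (le_iSup₂ (f := fun ν (_ : ν ≠ μ) => f.eigenspace ν) ν hν hx)
      rw [hφx, smul_zero, smul_zero]
  exact ⟨φ, hφv, fun x => hle (hf ▸ Submodule.mem_top)⟩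

theorem exists_eigenspace_le_of_centralizer_subset (hf : ⨆ μ, f.eigenspace μ = ⊤)
    (h : Set.centralizer {f} ⊆ Set.centralizer {f'}) {μ : K} (hμ : f.HasEigenvalue μ) :
    ∃ ν, f.eigenspace μ ≤ f'.eigenspace ν := by
  obtain ⟨v, hv⟩ := hμ.exists_hasEigenvector
  obtain ⟨φ, hφv, hφ⟩ := exists_dual_eigenvector hf hv
  refine ⟨(φ v)⁻¹ * φ (f' v), fun x hx => ?_⟩
  have hcomm : φ.smulRight x ∈ Set.centralizer {f} := by
    refine mem_centralizer_singleton_iff_commute.mpr (LinearMap.ext fun y => ?_)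
    simp only [Module.End.mul_apply, LinearMap.smulRight_apply, map_smul, hφ,
      Module.End.mem_eigenspace_iff.mp hx, smul_smul, mul_comm]
  have happly : φ v • f' x = φ (f' v) • x := by
    simpa using LinearMap.congr_fun (mem_centralizer_singleton_iff_commute.mp (h hcomm)).eq v
  rw [Module.End.mem_eigenspace_iff, mul_smul, ← happly, inv_smul_smul₀ hφv]

theorem eigenspaceSet_subset_of_centralizer_eq (hf : ⨆ μ, f.eigenspace μ = ⊤)
    (hf' : ⨆ μ, f'.eigenspace μ = ⊤) (h : Set.centralizer {f} = Set.centralizer {f'}) :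
    eigenspaceSet f ⊆ eigenspaceSet f' := by
  rintro _ ⟨μ, hμ, rfl⟩
  obtain ⟨ν, hμν⟩ := exists_eigenspace_le_of_centralizer_subset hf h.le hμ
  have hν : f'.HasEigenvalue ν := ne_bot_of_le_ne_bot hμ hμν
  obtain ⟨μ', hνμ'⟩ := exists_eigenspace_le_of_centralizer_subset hf' h.ge hν
  obtain rfl : μ = μ' := by
    by_contra hne
    exact hμ ((f.disjoint_genEigenspace hne 1 1).eq_bot_of_le (hμν.trans hνμ'))
  exact ⟨ν, hν, le_antisymm hνμ' hμν⟩

theorem centralizer_eq_iff_eigenspaceSet_eq (hf : ⨆ μ, f.eigenspace μ = ⊤)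
    (hf' : ⨆ μ, f'.eigenspace μ = ⊤) :
    Set.centralizer {f} = Set.centralizer {f'} ↔ eigenspaceSet f = eigenspaceSet f' where
  mp h := (eigenspaceSet_subset_of_centralizer_eq hf hf' h).antisymm
    (eigenspaceSet_subset_of_centralizer_eq hf' hf h.symm)
  mpr h := (centralizer_subset_of_eigenspaceSet_subset hf h.le).antisymm
    (centralizer_subset_of_eigenspaceSet_subset hf' h.ge)

open scoped Pointwise in
theorem toConjAct_smul_centralizer_eq_iff (hf : ⨆ μ, f.eigenspace μ = ⊤)
    (g : (Module.End K V)ˣ) :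
    ConjAct.toConjAct g • Set.centralizer {f} = Set.centralizer {f} ↔
      Submodule.map (g : Module.End K V) '' eigenspaceSet f = eigenspaceSet f := by
  rw [smul_centralizer, Set.smul_set_singleton,
    centralizer_eq_iff_eigenspaceSet_eq (iSup_eigenspace_toConjAct_smul g hf) hf,
    eigenspaceSet_toConjAct_smul]

end Centralizer

section Permutation

theorem exists_bijOn_of_image_image_eq {α β : Type*} [Nonempty α] {E : α → β} {P : β → β}
    {S : Set α} (hE : S.InjOn E) (hP : (E '' S).InjOn P) (h : P '' (E '' S) = E '' S) :
    ∃ γ : α → α, Set.BijOn γ S S ∧ ∀ a ∈ S, P (E a) = E (γ a) := by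
  have hEbij : Set.BijOn E S (E '' S) := hE.bijOn_image
  have hPbij : Set.BijOn P (E '' S) (E '' S) := ⟨Set.mapsTo_iff_image_subset.mpr h.le, hP, h.ge⟩
  have hinv := hEbij.invOn_invFunOn
  exact ⟨Function.invFunOn E S ∘ P ∘ E, (hEbij.symm hinv.symm).comp (hPbij.comp hEbij),
    fun a ha => (hinv.2 (hPbij.mapsTo (hEbij.mapsTo ha))).symm⟩

theorem image_image_eq_of_image_eq {α β : Type*} {E : α → β} {P : β → β} {S : Set α} {γ : α → α}
    (hγ : γ '' S = S) (h : ∀ a ∈ S, P (E a) = E (γ a)) : P '' (E '' S) = E '' S := by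
  rw [Set.image_image, Set.image_congr h, ← Set.image_image E γ, hγ]

theorem exists_linearEquiv_map_eq {R M M' ι : Type*} [Ring R] [AddCommGroup M] [Module R M]
    [AddCommGroup M'] [Module R M'] {U : ι → Submodule R M} {W : ι → Submodule R M'}
    (hU : iSupIndep U) (hU_top : ⨆ i, U i = ⊤) (hW : iSupIndep W) (hW_top : ⨆ i, W i = ⊤)
    (e : ∀ i, U i ≃ₗ[R] W i) :
    ∃ g : M ≃ₗ[R] M', ∀ i, (U i).map (g : M →ₗ[R] M') = W i := by
  classical
  let g := (hU.linearEquiv hU_top).symm ≪≫ₗ DFinsupp.mapRange.linearEquiv e ≪≫ₗ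
    hW.linearEquiv hW_top
  have hg (i : ι) (u : U i) : g u = e i u := by
    simp [g, iSupIndep.linearEquiv_symm_apply _ _ u.2]
  refine ⟨g, fun i => Submodule.ext fun w => ⟨?_, fun hw => ?_⟩⟩
  · rintro ⟨u, hu, rfl⟩
    exact (hg i ⟨u, hu⟩).symm ▸ (e i ⟨u, hu⟩).2
  · refine ⟨(e i).symm ⟨w, hw⟩, Subtype.property _, ?_⟩
    exact (hg i _).trans (by rw [LinearEquiv.apply_symm_apply])

variable {K V : Type*} [Field K] [AddCommGroup V] [Module K V] {f : Module.End K V}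

theorem exists_units_map_eigenspace_eq (hf : ⨆ μ, f.eigenspace μ = ⊤) {γ : K → K}
    (hγ : Set.BijOn γ {μ | f.HasEigenvalue μ} {μ | f.HasEigenvalue μ})
    (hrank : ∀ μ, f.HasEigenvalue μ →
      Module.rank K (f.eigenspace (γ μ)) = Module.rank K (f.eigenspace μ)) :
    ∃ g : (Module.End K V)ˣ, ∀ μ, f.HasEigenvalue μ →
      (f.eigenspace μ).map (g : Module.End K V) = f.eigenspace (γ μ) := by
  let σ := hγ.equiv
  let U : {μ | f.HasEigenvalue μ} → Submodule K V := fun μ => f.eigenspace μ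
  have hU : iSupIndep U := f.eigenspaces_iSupIndep.comp Subtype.val_injective
  have hU_top : ⨆ μ, U μ = ⊤ := (iSup_ne_bot_subtype f.eigenspace).trans hf
  obtain ⟨g, hg⟩ := exists_linearEquiv_map_eq (W := U ∘ σ) hU hU_top (hU.comp σ.injective)
    ((σ.iSup_comp (g := U)).trans hU_top) fun μ => LinearEquiv.ofRankEq _ _ (hrank μ μ.2).symm
  exact ⟨LinearMap.GeneralLinearGroup.ofLinearEquiv g, fun μ hμ => hg ⟨μ, hμ⟩⟩

end Permutation

namespace EigenspaceSetup

variable {𝕂 : Type*} [Field 𝕂] {N : ℕ}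

theorem eigSp_eq_eigenspace (s : EndV 𝕂 N) : eigSp s = s.eigenspace :=
  funext fun _ => Module.End.eigenspace_def.symm

theorem mem_specE_iff_hasEigenvalue (s : EndV 𝕂 N) (c : 𝕂) :
    c ∈ specE s ↔ s.HasEigenvalue c := by
  rw [Module.End.hasEigenvalue_iff, ← eigSp_eq_eigenspace]
  exact Nat.pos_iff_ne_zero.trans Submodule.finrank_eq_zero.not

theorem specE_eq_setOf_hasEigenvalue (s : EndV 𝕂 N) : specE s = {c | s.HasEigenvalue c} :=
  Set.ext (mem_specE_iff_hasEigenvalue s)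

theorem cent_eq_centralizer (s : EndV 𝕂 N) : cent s = Set.centralizer {s} :=
  Set.ext fun _ => eq_comm.trans mem_centralizer_singleton_iff_commute.symm

theorem multE_eq_iff_rank_eq (s : EndV 𝕂 N) (c d : 𝕂) :
    multE s c = multE s d ↔
      Module.rank 𝕂 (s.eigenspace c) = Module.rank 𝕂 (s.eigenspace d) := by
  rw [← Module.finrank_eq_rank, ← Module.finrank_eq_rank, Nat.cast_inj, multE, multE,
    eigSp_eq_eigenspace]

open scoped Pointwise in
theorem conjAct_image_eq_smul (g : (EndV 𝕂 N)ˣ) (S : Set (EndV 𝕂 N)) :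
    conjAct g '' S = ConjAct.toConjAct g • S :=
  rfl

theorem isSemisimpleE_iff_iSup_eigenspace_eq_top (s : EndV 𝕂 N) :
    IsSemisimpleE s ↔ ⨆ c, s.eigenspace c = ⊤ := by
  rw [← eigSp_eq_eigenspace]
  rfl

end EigenspaceSetup

open scoped Pointwise in
theorem normalizer_of_centralizer_permutes_eigenspaces_general {K V : Type*} [Field K]
    [AddCommGroup V] [Module K V] (s : Module.End K V) (hs : ⨆ c, s.eigenspace c = ⊤) :
    (∀ g : (Module.End K V)ˣ,
      ConjAct.toConjAct g • Set.centralizer {s} = Set.centralizer {s} →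
        ∃ γ : K → K, Set.BijOn γ {c | s.HasEigenvalue c} {c | s.HasEigenvalue c} ∧
          ∀ c, s.HasEigenvalue c →
            (s.eigenspace c).map (g : Module.End K V) = s.eigenspace (γ c)) ∧
    (∀ γ : K → K, Set.BijOn γ {c | s.HasEigenvalue c} {c | s.HasEigenvalue c} →
      ((∃ g : (Module.End K V)ˣ,
          ConjAct.toConjAct g • Set.centralizer {s} = Set.centralizer {s} ∧
            ∀ c, s.HasEigenvalue c →
              (s.eigenspace c).map (g : Module.End K V) = s.eigenspace (γ c)) ↔
        ∀ c, s.HasEigenvalue c →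
          Module.rank K (s.eigenspace (γ c)) = Module.rank K (s.eigenspace c))) := by
  simp only [toConjAct_smul_centralizer_eq_iff hs]
  refine ⟨fun g hg => ?_, fun γ hγ => ⟨?_, fun hrank => ?_⟩⟩
  · exact exists_bijOn_of_image_image_eq (s.injOn_genEigenspace 1)
      (map_units_injective g).injOn hg
  · rintro ⟨g, -, hg⟩ c hc
    rw [← hg c hc]
    exact LinearEquiv.rank_map_eq (LinearMap.GeneralLinearGroup.toLinearEquiv g) _
  · obtain ⟨g, hg⟩ := exists_units_map_eigenspace_eq hs hγ hrank
    exact ⟨g, image_image_eq_of_image_eq hγ.image_eq hg, hg⟩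

theorem normalizer_of_centralizer_permutes_eigenspaces {𝕂 : Type*} [Field 𝕂]
    [IsAlgClosed 𝕂] [CharZero 𝕂] {N : ℕ}
    (s : EndV 𝕂 N) (hss : IsSemisimpleE s) :
    (∀ g : (EndV 𝕂 N)ˣ, conjAct g '' cent s = cent s →
      ∃ γ : 𝕂 → 𝕂, Set.BijOn γ (specE s) (specE s) ∧
        ∀ c ∈ specE s, Submodule.map (g : EndV 𝕂 N) (eigSp s c) = eigSp s (γ c)) ∧
    (∀ γ : 𝕂 → 𝕂, Set.BijOn γ (specE s) (specE s) →
      ((∃ g : (EndV 𝕂 N)ˣ, conjAct g '' cent s = cent s ∧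
          ∀ c ∈ specE s, Submodule.map (g : EndV 𝕂 N) (eigSp s c) = eigSp s (γ c)) ↔
        ∀ c ∈ specE s, multE s (γ c) = multE s c)) := by
  simpa only [conjAct_image_eq_smul, cent_eq_centralizer, specE_eq_setOf_hasEigenvalue,
    eigSp_eq_eigenspace, multE_eq_iff_rank_eq, Set.mem_ofPred_eq] using
    normalizer_of_centralizer_permutes_eigenspaces_general s
      ((isSemisimpleE_iff_iSup_eigenspace_eq_top s).mp hss)
end

section
/- In type AIII, let s ∈ p be semisimple, and let Spec±(s) denote the set of classes ±c of elements c ∈ spec(s) under multiplication by −1 (note spec(s) = −spec(s) since s ∈ p). Let γ be a permutation of Spec±(s) ∖ {0} such that m(s,c) = m(s,d) whenever γ(±c) = ±d; extend γ to Spec±(s) by γ(0) = 0. Then there exists k ∈ K with k·g^s·k⁻¹ = g^s and k·(V_{s,c} ⊕ V_{s,−c}) = V_{s,d} ⊕ V_{s,−d} whenever γ(±c) = ±d (in particular k·V_{s,0} = V_{s,0}). -/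
/-! In type AIII, a multiplicity-preserving permutation of the classes `±c` of eigenvalues
of a semisimple `s ∈ p` is realized by an element of `K` normalizing `g^s`. -/

namespace SymmetricPairAIII

variable {𝕂 : Type*} [Field 𝕂] {N : ℕ}

/-- The eigenspace `V_{s,c} = ker (s − c·Id)`. -/
def eigSp (s : EndV 𝕂 N) (c : 𝕂) : Submodule 𝕂 (Fin N → 𝕂) :=
  LinearMap.ker (s - c • (1 : EndV 𝕂 N))

/-- The multiplicity `m(s,c) = dim ker (s − c·Id)`. -/
noncomputable def multE (s : EndV 𝕂 N) (c : 𝕂) : ℕ := Module.finrank 𝕂 (eigSp s c)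

/-- The spectrum `spec(s) = {c : m(s,c) > 0}`. -/
def specE (s : EndV 𝕂 N) : Set 𝕂 := {c | 0 < multE s c}

end SymmetricPairAIII

open SymmetricPairAIII

/-!
Let `ε` be the involution which is `1` on `V_a` and `-1` on `V_b`. Since `s ∈ p` anticommutes with
`ε`, the map `ε` interchanges `V_{s,c}` and `V_{s,-c}`, and a linear automorphism lies in `K` as
soon as it commutes with `ε`. Choose one element `c` in each pair `{c, -c}` with `c ≠ 0`, choose any
isomorphism `V_{s,c} ≃ V_{s,γ(c)}`, transport it by `ε` to `V_{s,-c} ≃ V_{s,-γ(c)}`, and take the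
identity on `V_{s,0}`. These isomorphisms glue to an automorphism `k` of `V` which commutes with `ε`
and permutes the eigenspaces of `s`. It normalizes `g^s` because `z` commutes with `s` if and only
if `z` stabilizes every eigenspace of `s`.
-/

namespace SymmetricPairAIII

open Module.End Function DirectSum

theorem linearMap_ext_of_iSup_eq_top_s10 {R M M₂ : Type*} {ι : Sort*} [Semiring R] [AddCommMonoid M]
    [Module R M] [AddCommMonoid M₂] [Module R M₂] {A : ι → Submodule R M} (hA : ⨆ i, A i = ⊤)
    {f g : M →ₗ[R] M₂} (hfg : ∀ i, ∀ v ∈ A i, f v = g v) : f = g := by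
  have htop : ⨆ i, A i ≤ LinearMap.eqLocus f g := iSup_le hfg
  rw [hA] at htop
  exact LinearMap.ext fun v => htop Submodule.mem_top

section Gluing

variable {R M M₂ ι : Type*} [DecidableEq ι]

theorem exists_linearEquiv_of_isInternal [Semiring R] [AddCommMonoid M] [Module R M]
    [AddCommMonoid M₂] [Module R M₂] {A : ι → Submodule R M} {B : ι → Submodule R M₂}
    (hA : IsInternal A) (hB : IsInternal B) (e : ∀ i, A i ≃ₗ[R] B i) :
    ∃ k : M ≃ₗ[R] M₂, ∀ i (v : A i), k v = e i v := by
  let sumA := LinearEquiv.ofBijective (coeLinearMap A) hA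
  let sumB := LinearEquiv.ofBijective (coeLinearMap B) hB
  refine ⟨sumA.symm ≪≫ₗ DFinsupp.mapRange.linearEquiv e ≪≫ₗ sumB, fun i v => ?_⟩
  have hv : sumA.symm v = lof R ι (fun i => A i) i v :=
    sumA.symm_apply_eq.2 (coeLinearMap_lof A i v).symm
  have hmap : DFinsupp.mapRange.linearEquiv e (lof R ι (fun i => A i) i v) =
      lof R ι (fun i => B i) i (e i v) :=
    DFinsupp.mapRange_single (hf := fun i => (e i).map_zero)
  rw [LinearEquiv.trans_apply, LinearEquiv.trans_apply, hv, hmap]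
  exact coeLinearMap_lof B i (e i v)

theorem isInternal_comp_equiv {κ : Type*} [DecidableEq κ] [Ring R] [AddCommGroup M] [Module R M]
    {A : ι → Submodule R M} (hA : IsInternal A) (π : κ ≃ ι) : IsInternal (A ∘ π) :=
  isInternal_submodule_of_iSupIndep_of_iSup_eq_top (hA.submodule_iSupIndep.comp π.injective)
    (π.iSup_comp.trans hA.submodule_iSup_eq_top)

end Gluing

section Equivariance

variable {R M ι : Type*} [Semiring R] [AddCommMonoid M] [Module R M]
  {A : ι → Submodule R M} {ε : Module.End R M} {ν : ι → ι}

theorem map_eq_of_involutive (hε : Involutive ε) (hν : Involutive ν)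
    (hεA : ∀ i, ∀ v ∈ A i, ε v ∈ A (ν i)) (i : ι) : (A i).map ε = A (ν i) := by
  refine le_antisymm (Submodule.map_le_iff_le_comap.2 (hεA i)) fun w hw => ?_
  have hεw := hεA _ w hw
  rw [hν i] at hεw
  exact ⟨ε w, hεw, hε w⟩

theorem exists_equivariant_linearEquiv (hε : Involutive ε) (hν : Involutive ν)
    (hεA : ∀ i, ∀ v ∈ A i, ε v ∈ A (ν i)) {π : ι → ι} (hπ : ∀ i, π (ν i) = ν (π i))
    (hfix : ∀ i, ν i = i → π i = i) (hiso : ∀ i, Nonempty (A i ≃ₗ[R] A (π i))) :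
    ∃ e : ∀ i, A i ≃ₗ[R] A (π i),
      ∀ i (v : A i) (w : A (ν i)), (w : M) = ε v → (e (ν i) w : M) = ε (e i v) := by
  classical
  let f := fun i => (hiso i).some
  have f_congr {i j : ι} (hij : i = j) (v : A i) (w : A j) (hvw : (v : M) = w) :
      (f i v : M) = f j w := by
    subst hij
    rw [Subtype.ext hvw]
  let E := LinearEquiv.ofInvolutive ε hε
  have hE := map_eq_of_involutive hε hν hεA
  have hEπ (i : ι) : (A (π (ν i))).map ε = A (π i) := by rw [hE, hπ, hν]
  let transport (i : ι) : A i ≃ₗ[R] A (π i) :=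
    E.ofSubmodules _ _ (hE i) ≪≫ₗ f (ν i) ≪≫ₗ E.ofSubmodules _ _ (hEπ i)
  -- `WellOrderingRel i (ν i)` holds for exactly one index of each orbit `{i, ν i}` of size two.
  let e (i : ι) : A i ≃ₗ[R] A (π i) :=
    if hi : ν i = i then LinearEquiv.ofEq _ _ (by rw [hfix i hi])
    else if WellOrderingRel i (ν i) then f i else transport i
  refine ⟨e, fun i v w hw => ?_⟩
  by_cases hi : ν i = i
  · have hi' : ν (ν i) = ν i := congrArg ν hi
    simp only [e, dif_pos hi, dif_pos hi', LinearEquiv.coe_ofEq_apply, hw]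
  have hi' : ν (ν i) ≠ ν i := fun h => hi (hν.injective h)
  by_cases hlt : WellOrderingRel i (ν i)
  · have hlt' : ¬ WellOrderingRel (ν i) (ν (ν i)) := by rw [hν]; exact asymm hlt
    simp only [e, dif_neg hi, dif_neg hi', if_pos hlt, if_neg hlt']
    exact congrArg ε (f_congr (hν i) _ v ((congrArg ε hw).trans (hε v)))
  · have hlt' : WellOrderingRel (ν i) (ν (ν i)) := by
      rw [hν]
      exact (trichotomous_of WellOrderingRel i (ν i)).resolve_left hlt |>.resolve_left (Ne.symm hi)
    simp only [e, dif_neg hi, dif_neg hi', if_neg hlt, if_pos hlt']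
    exact (congrArg (fun u => (f (ν i) u : M)) (Subtype.ext hw)).trans (hε _).symm

end Equivariance

theorem exists_linearEquiv_commute_map_eq {R M ι : Type*} [Ring R] [AddCommGroup M] [Module R M]
    [DecidableEq ι] {A : ι → Submodule R M} {ε : Module.End R M} {ν : ι → ι} (hA : IsInternal A)
    (hε : Involutive ε) (hν : Involutive ν) (hεA : ∀ i, ∀ v ∈ A i, ε v ∈ A (ν i))
    {π : Equiv.Perm ι} (hπ : ∀ i, π (ν i) = ν (π i)) (hfix : ∀ i, ν i = i → π i = i)
    (hiso : ∀ i, Nonempty (A i ≃ₗ[R] A (π i))) :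
    ∃ k : M ≃ₗ[R] M, Commute k.toLinearMap ε ∧ ∀ i, (A i).map k.toLinearMap = A (π i) := by
  obtain ⟨e, he⟩ := exists_equivariant_linearEquiv hε hν hεA hπ hfix hiso
  obtain ⟨k, hk⟩ := exists_linearEquiv_of_isInternal hA (isInternal_comp_equiv hA π) e
  refine ⟨k, ?_, fun i => le_antisymm ?_ fun w hw => ?_⟩
  · refine linearMap_ext_of_iSup_eq_top_s10 hA.submodule_iSup_eq_top fun i v hv => ?_
    calc k (ε v) = e (ν i) ⟨ε v, hεA i v hv⟩ := hk (ν i) ⟨ε v, hεA i v hv⟩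
      _ = ε (e i ⟨v, hv⟩) := he i ⟨v, hv⟩ _ rfl
      _ = ε (k v) := congrArg ε (hk i ⟨v, hv⟩).symm
  · rintro _ ⟨v, hv, rfl⟩
    exact (hk i ⟨v, hv⟩).symm ▸ (e i ⟨v, hv⟩).2
  · let v := (e i).symm ⟨w, hw⟩
    exact ⟨v, v.2, (hk i v).trans (congrArg _ ((e i).apply_symm_apply ⟨w, hw⟩))⟩

theorem eq_zero_of_eq_neg (R : Type*) {M : Type*} [Ring R] [IsDomain R] [NeZero (2 : R)]
    [AddCommGroup M] [Module R M] [Module.IsTorsionFree R M] {v : M} (hv : v = -v) : v = 0 := by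
  have htwo : (2 : R) • v = 0 := by rwa [two_smul, ← eq_neg_iff_add_eq_zero]
  exact (smul_eq_zero.1 htwo).resolve_left two_ne_zero

section Involution

variable {R M : Type*} [Ring R] [AddCommGroup M] [Module R M] {p q : Submodule R M}

/-- The involution `ε` attached to `M = p ⊕ q`: it is the identity on `p` and `-1` on `q`. -/
noncomputable def involutionOfIsCompl (h : IsCompl p q) : Module.End R M :=
  LinearMap.ofIsCompl h p.subtype (-q.subtype)

theorem involutionOfIsCompl_apply_left (h : IsCompl p q) {v : M} (hv : v ∈ p) :
    involutionOfIsCompl h v = v :=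
  LinearMap.ofIsCompl_apply_left h ⟨v, hv⟩

theorem involutionOfIsCompl_apply_right (h : IsCompl p q) {v : M} (hv : v ∈ q) :
    involutionOfIsCompl h v = -v :=
  LinearMap.ofIsCompl_apply_right h ⟨v, hv⟩

theorem involutive_involutionOfIsCompl (h : IsCompl p q) : Involutive (involutionOfIsCompl h) := by
  intro v
  obtain ⟨a, b, ha, hb, rfl⟩ := Submodule.codisjoint_iff_exists_add_eq.1 h.codisjoint v
  simp only [map_add, map_neg, involutionOfIsCompl_apply_left h ha,
    involutionOfIsCompl_apply_right h hb, neg_neg]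

theorem involutionOfIsCompl_anticommute (h : IsCompl p q) {s : Module.End R M}
    (hp : p.map s ≤ q) (hq : q.map s ≤ p) (v : M) :
    s (involutionOfIsCompl h v) = -involutionOfIsCompl h (s v) := by
  obtain ⟨a, b, ha, hb, rfl⟩ := Submodule.codisjoint_iff_exists_add_eq.1 h.codisjoint v
  have hsa : s a ∈ q := hp ⟨a, ha, rfl⟩
  have hsb : s b ∈ p := hq ⟨b, hb, rfl⟩
  simp only [map_add, map_neg, involutionOfIsCompl_apply_left h ha,
    involutionOfIsCompl_apply_right h hb, involutionOfIsCompl_apply_right h hsa,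
    involutionOfIsCompl_apply_left h hsb, neg_add, neg_neg]

variable [IsDomain R] [NeZero (2 : R)] [Module.IsTorsionFree R M]

theorem involutionOfIsCompl_apply_eq_self_iff (h : IsCompl p q) {v : M} :
    involutionOfIsCompl h v = v ↔ v ∈ p := by
  refine ⟨fun hv => ?_, involutionOfIsCompl_apply_left h⟩
  obtain ⟨a, b, ha, hb, rfl⟩ := Submodule.codisjoint_iff_exists_add_eq.1 h.codisjoint v
  rw [map_add, involutionOfIsCompl_apply_left h ha, involutionOfIsCompl_apply_right h hb] at hv
  have hb0 : b = 0 := eq_zero_of_eq_neg R (add_left_cancel hv).symm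
  rwa [hb0, add_zero]

theorem involutionOfIsCompl_apply_eq_neg_iff (h : IsCompl p q) {v : M} :
    involutionOfIsCompl h v = -v ↔ v ∈ q := by
  refine ⟨fun hv => ?_, involutionOfIsCompl_apply_right h⟩
  obtain ⟨a, b, ha, hb, rfl⟩ := Submodule.codisjoint_iff_exists_add_eq.1 h.codisjoint v
  rw [map_add, involutionOfIsCompl_apply_left h ha, involutionOfIsCompl_apply_right h hb,
    neg_add] at hv
  have ha0 : a = 0 := eq_zero_of_eq_neg R (add_right_cancel hv)
  rwa [ha0, zero_add]

theorem map_eq_of_commute_involutionOfIsCompl (h : IsCompl p q) {k : M ≃ₗ[R] M}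
    (hk : Commute k.toLinearMap (involutionOfIsCompl h)) :
    p.map k.toLinearMap = p ∧ q.map k.toLinearMap = q := by
  have hk' (v : M) : k (involutionOfIsCompl h v) = involutionOfIsCompl h (k v) :=
    LinearMap.congr_fun hk v
  constructor <;> ext w <;> obtain ⟨v, rfl⟩ := k.surjective w
  · rw [Submodule.mem_map_equiv, k.symm_apply_apply, ← involutionOfIsCompl_apply_eq_self_iff h,
      ← involutionOfIsCompl_apply_eq_self_iff h, ← hk', k.injective.eq_iff]
  · rw [Submodule.mem_map_equiv, k.symm_apply_apply, ← involutionOfIsCompl_apply_eq_neg_iff h,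
      ← involutionOfIsCompl_apply_eq_neg_iff h, ← hk', ← map_neg, k.injective.eq_iff]

end Involution

section Centralizer

variable {R M : Type*} [CommRing R] [AddCommGroup M] [Module R M] {s : Module.End R M}

theorem iSup_eigenvalues_eigenspace_eq_top (hss : ⨆ c, s.eigenspace c = ⊤) :
    ⨆ c : {c // s.HasEigenvalue c}, s.eigenspace c = ⊤ :=
  (iSup_ne_bot_subtype s.eigenspace).trans hss

theorem commute_iff_map_eigenspace_le (hss : ⨆ c, s.eigenspace c = ⊤) {z : Module.End R M} :
    Commute z s ↔ ∀ c, s.HasEigenvalue c → (s.eigenspace c).map z ≤ s.eigenspace c := by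
  refine ⟨fun hz c _ => Submodule.map_le_iff_le_comap.2 fun v hv => ?_, fun hz => ?_⟩
  · exact mapsTo_genEigenspace_of_comm hz.symm c 1 hv
  · refine linearMap_ext_of_iSup_eq_top_s10 (iSup_eigenvalues_eigenspace_eq_top hss) fun c v hv => ?_
    calc z (s v) = (c : R) • z v := by rw [mem_eigenspace_iff.1 hv, map_smul]
      _ = s (z v) := (mem_eigenspace_iff.1 (hz c c.2 ⟨v, hv, rfl⟩)).symm

theorem commute_conj_iff_of_map_eigenspace_eq (hss : ⨆ c, s.eigenspace c = ⊤) {γ : R → R}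
    (hγ : γ '' {c | s.HasEigenvalue c} = {c | s.HasEigenvalue c}) {k : M ≃ₗ[R] M}
    (hk : ∀ c, s.HasEigenvalue c → (s.eigenspace c).map k.toLinearMap = s.eigenspace (γ c))
    {z : Module.End R M} : Commute (k.conj z) s ↔ Commute z s := by
  have hmap (c : R) (hc : s.HasEigenvalue c) :
      (s.eigenspace (γ c)).map (k.conj z) ≤ s.eigenspace (γ c) ↔
        (s.eigenspace c).map z ≤ s.eigenspace c := by
    have hconj : k.conj z ∘ₗ k.toLinearMap = k.toLinearMap ∘ₗ z := by
      ext v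
      simp [LinearEquiv.conj_apply]
    rw [← hk c hc, ← Submodule.map_comp, hconj, Submodule.map_comp,
      Submodule.map_le_map_iff_of_injective k.injective]
  rw [commute_iff_map_eigenspace_le hss, commute_iff_map_eigenspace_le hss]
  obtain ⟨hsurj, hmaps⟩ := Set.image_eq_iff_surjOn_mapsTo.1 hγ
  refine ⟨fun hz c hc => (hmap c hc).1 (hz _ (hmaps hc)), fun hz d hd => ?_⟩
  obtain ⟨c, hc, rfl⟩ := hsurj hd
  exact (hmap c hc).2 (hz c hc)

theorem image_conj_centralizer_eq (hss : ⨆ c, s.eigenspace c = ⊤) {γ : R → R}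
    (hγ : γ '' {c | s.HasEigenvalue c} = {c | s.HasEigenvalue c}) {k : M ≃ₗ[R] M}
    (hk : ∀ c, s.HasEigenvalue c → (s.eigenspace c).map k.toLinearMap = s.eigenspace (γ c)) :
    k.conj '' Set.centralizer {s} = Set.centralizer {s} := by
  have hpre : k.conj ⁻¹' Set.centralizer {s} = Set.centralizer {s} := by
    ext z
    simpa [Set.mem_centralizer_iff, commute_iff_eq, eq_comm] using
      commute_conj_iff_of_map_eigenspace_eq hss hγ hk (z := z)
  conv_lhs => rw [← hpre]
  exact Set.image_preimage_eq _ k.conj.surjective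

end Centralizer

section Anticommuting

variable {R M : Type*} [CommRing R] [AddCommGroup M] [Module R M] {s ε : Module.End R M}

theorem apply_mem_eigenspace_neg (hεs : ∀ v, s (ε v) = -ε (s v)) {c : R} {v : M}
    (hv : v ∈ s.eigenspace c) : ε v ∈ s.eigenspace (-c) := by
  rw [mem_eigenspace_iff] at hv ⊢
  rw [hεs, hv, map_smul, neg_smul]

theorem hasEigenvalue_neg (hε : Injective ε) (hεs : ∀ v, s (ε v) = -ε (s v)) {c : R}
    (hc : s.HasEigenvalue c) : s.HasEigenvalue (-c) := by
  obtain ⟨v, hv, hv0⟩ := hc.exists_hasEigenvector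
  exact hasEigenvalue_of_hasEigenvector
    ⟨apply_mem_eigenspace_neg hεs hv, (map_ne_zero_iff ε hε).2 hv0⟩

theorem exists_linearEquiv_commute_map_eigenspace_eq [IsDomain R] [NeZero (2 : R)]
    [Module.IsTorsionFree R M] (hε : Involutive ε) (hεs : ∀ v, s (ε v) = -ε (s v))
    (hss : ⨆ c, s.eigenspace c = ⊤) {γ : R → R}
    (hγ : Set.BijOn γ {c | s.HasEigenvalue c} {c | s.HasEigenvalue c})
    (hγodd : ∀ c, s.HasEigenvalue c → γ (-c) = -γ c)
    (hγiso : ∀ c, s.HasEigenvalue c → Nonempty (s.eigenspace c ≃ₗ[R] s.eigenspace (γ c))) :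
    ∃ k : M ≃ₗ[R] M, Commute k.toLinearMap ε ∧
      ∀ c, s.HasEigenvalue c → (s.eigenspace c).map k.toLinearMap = s.eigenspace (γ c) := by
  classical
  let ν : {c // s.HasEigenvalue c} → {c // s.HasEigenvalue c} :=
    fun c => ⟨-c, hasEigenvalue_neg hε.injective hεs c.2⟩
  have hfix (c : {c // s.HasEigenvalue c}) (hc : ν c = c) : γ c = c := by
    have hc0 : (c : R) = 0 :=
      eq_zero_of_eq_neg R (congrArg Subtype.val hc).symm
    have hγc : γ c = -γ c := by simpa only [hc0, neg_zero] using hγodd c c.2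
    rw [eq_zero_of_eq_neg R hγc, hc0]
  have hint : IsInternal fun c : {c // s.HasEigenvalue c} => s.eigenspace c :=
    isInternal_ne_bot_iff.2 <|
      isInternal_submodule_of_iSupIndep_of_iSup_eq_top s.eigenspaces_iSupIndep hss
  obtain ⟨k, hkε, hk⟩ := exists_linearEquiv_commute_map_eq hint hε (ν := ν)
    (π := hγ.equiv) (fun c => Subtype.ext (neg_neg _)) (fun _ _ => apply_mem_eigenspace_neg hεs)
    (fun c => Subtype.ext (hγodd c c.2)) (fun c hc => Subtype.ext (hfix c hc))
    (fun c => hγiso c c.2)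
  exact ⟨k, hkε, fun c hc => hk ⟨c, hc⟩⟩

end Anticommuting

section Eigenspaces

variable {𝕂 : Type*} [Field 𝕂] {N : ℕ} (s : EndV 𝕂 N)

theorem eigSp_eq_eigenspace : eigSp s = s.eigenspace :=
  funext fun _ => eigenspace_def.symm

theorem multE_eq_finrank_eigenspace (c : 𝕂) : multE s c = Module.finrank 𝕂 (s.eigenspace c) := by
  rw [multE, eigSp_eq_eigenspace]

theorem isSemisimpleE_iff_iSup_eigenspace_eq_top :
    IsSemisimpleE s ↔ ⨆ c, s.eigenspace c = ⊤ := by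
  rw [← eigSp_eq_eigenspace]
  exact Iff.rfl

theorem specE_eq_setOf_hasEigenvalue : specE s = {c | s.HasEigenvalue c} := by
  ext c
  change 0 < multE s c ↔ s.eigenspace c ≠ ⊥
  rw [multE_eq_finrank_eigenspace]
  exact Submodule.one_le_finrank_iff

theorem cent_eq_centralizer_s10 : cent s = Set.centralizer {s} := by
  ext z
  simp [cent, Set.mem_centralizer_iff, eq_comm]

end Eigenspaces

end SymmetricPairAIII

/-- Over a domain, isomorphic eigenspaces take the place of eigenspaces of equal dimension. -/
theorem K_realizes_permutation_of_pm_classes_typeAIII_general {R M : Type*} [CommRing R]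
    [IsDomain R] [NeZero (2 : R)] [AddCommGroup M] [Module R M] [Module.IsTorsionFree R M]
    {Ma Mb : Submodule R M} (hMab : IsCompl Ma Mb) {s : Module.End R M}
    (hsa : Ma.map s ≤ Mb) (hsb : Mb.map s ≤ Ma) (hss : ⨆ c, s.eigenspace c = ⊤) {γ : R → R}
    (hγ : Set.BijOn γ {c | s.HasEigenvalue c} {c | s.HasEigenvalue c})
    (hγodd : ∀ c, s.HasEigenvalue c → γ (-c) = -γ c)
    (hγiso : ∀ c, s.HasEigenvalue c → Nonempty (s.eigenspace c ≃ₗ[R] s.eigenspace (γ c))) :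
    ∃ k : (Module.End R M)ˣ, (Ma.map k.val = Ma ∧ Mb.map k.val = Mb) ∧
      (fun z => k.val * z * k⁻¹.val) '' Set.centralizer {s} = Set.centralizer {s} ∧
      ∀ c, s.HasEigenvalue c → (s.eigenspace c ⊔ s.eigenspace (-c)).map k.val =
        s.eigenspace (γ c) ⊔ s.eigenspace (-γ c) := by
  have hε := involutive_involutionOfIsCompl hMab
  have hεs := involutionOfIsCompl_anticommute hMab hsa hsb
  obtain ⟨k, hkε, hk⟩ := exists_linearEquiv_commute_map_eigenspace_eq hε hεs hss hγ hγodd hγiso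
  refine ⟨LinearMap.GeneralLinearGroup.ofLinearEquiv k,
    map_eq_of_commute_involutionOfIsCompl hMab hkε,
    image_conj_centralizer_eq hss hγ.image_eq hk, fun c hc => ?_⟩
  calc (s.eigenspace c ⊔ s.eigenspace (-c)).map k.toLinearMap
      = s.eigenspace (γ c) ⊔ s.eigenspace (γ (-c)) := by
        rw [Submodule.map_sup, hk c hc, hk (-c) (hasEigenvalue_neg hε.injective hεs hc)]
    _ = s.eigenspace (γ c) ⊔ s.eigenspace (-γ c) := by rw [hγodd c hc]

/-- The permutation of `Spec±(s) ∖ {0}` is encoded by an odd map `γ` on `spec(s)` fixing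
`0`, bijective on `spec(s)` and preserving multiplicities. -/
theorem K_realizes_permutation_of_pm_classes_typeAIII {𝕂 : Type*} [Field 𝕂]
    [IsAlgClosed 𝕂] [CharZero 𝕂] {N : ℕ}
    (Va Vb : Submodule 𝕂 (Fin N → 𝕂)) (hVab : IsCompl Va Vb)
    (s : EndV 𝕂 N) (hs : s ∈ pAIII Va Vb) (hss : IsSemisimpleE s)
    (γ : 𝕂 → 𝕂) (hγ0 : γ 0 = 0)
    (hγbij : Set.BijOn γ (specE s) (specE s))
    (hγodd : ∀ c ∈ specE s, γ (-c) = -(γ c))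
    (hγmult : ∀ c ∈ specE s, multE s (γ c) = multE s c) :
    ∃ k : (EndV 𝕂 N)ˣ, k ∈ KAIII Va Vb ∧
      conjAct k '' cent s = cent s ∧
      ∀ c ∈ specE s,
        Submodule.map (k : EndV 𝕂 N) (eigSp s c ⊔ eigSp s (-c)) =
          eigSp s (γ c) ⊔ eigSp s (-(γ c)) := by
  simp only [specE_eq_setOf_hasEigenvalue, eigSp_eq_eigenspace, cent_eq_centralizer_s10,
    multE_eq_finrank_eigenspace, isSemisimpleE_iff_iSup_eigenspace_eq_top] at *
  exact K_realizes_permutation_of_pm_classes_typeAIII_general hVab hs.1 hs.2 hss hγbij hγodd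
    fun c hc => FiniteDimensional.nonempty_linearEquiv_of_finrank_eq (hγmult c hc).symm
end
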